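/- There exists a complex number ρ₀ with 1.1 < Re(ρ₀) < 1.25 and 3.3 < Im(ρ₀) < 3.55 such that the set of zeros of f₂ in the closed right half-plane Re(s) ≥ 1/2 is exactly {2, ρ₀, conj(ρ₀)}, and each of these three zeros is simple (the derivative of f₂ does not vanish there). -/

import Mathlib

open Complex

noncomputable def chi (s : ℂ) : ℂ := s * (s - 1) * completedRiemannZeta₀ s + 1

noncomputable def A : ℂ := Real.pi / 3 - 1

noncomputable def f1 (s : ℂ) : ℂ :=
  (s - 1) * ((s - 1) * (3 * s - 2) * (A * s - A + 1) * chi (s + 1) * chi (3 * s)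
    - (s + 1) * (s - 2) * chi s * chi (3 * s - 1)
    - 2 * (s - 1) * (s - 2) * chi s * chi (3 * s))

noncomputable def f2 (s : ℂ) : ℂ :=
  (s - 2) * ((A * s + 3) * (s - 1) ^ 2 * chi (s + 2)
    - 2 * (s - 1) * (s - 3) * chi (s + 1)
    - (s + 2) * (s - 3) * chi s)

noncomputable def Z1 (s : ℂ) : ℂ := chi (2 * s) * f1 s - chi (2 * s - 1) * f1 (1 - s)

noncomputable def Z2 (s : ℂ) : ℂ := chi (2 * s) * f2 s - chi (2 * s - 1) * f2 (1 - s)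

noncomputable def Psi (x : ℝ) : ℝ := HurwitzZeta.evenKernel 0 x - 1

noncomputable def Kk (u : ℝ) : ℝ := Psi (Real.exp (2 * u)) * Real.exp (u / 2)

noncomputable def FF : ℝ → ℂ := (Set.Ioi 1).indicator (fun x => (Psi x : ℂ))

lemma fmod_of_gt {x : ℝ} (hx : 1 < x) :
    (HurwitzZeta.hurwitzEvenFEPair 0).f_modif x = (Psi x : ℂ) := by
  simp [WeakFEPair.f_modif, hx, not_lt.mpr hx.le, HurwitzZeta.hurwitzEvenFEPair, Psi]

lemma fmod_eq {x : ℝ} (hx : 0 < x) :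
    (HurwitzZeta.hurwitzEvenFEPair 0).f_modif x
      = FF x + (x : ℂ) ^ (-(1 / 2) : ℂ) • FF x⁻¹ := by
  rcases lt_trichotomy 1 x with h | rfl | h
  · have h1 : ¬ (1 < x⁻¹) := by
      rw [not_lt]; exact inv_le_one_of_one_le₀ h.le
    rw [fmod_of_gt h]
    simp [FF, h, h1]
  · simp [FF, WeakFEPair.f_modif]
  · have h1 : 1 < x⁻¹ := (one_lt_inv₀ hx).mpr h
    have h2 := (HurwitzZeta.hurwitzEvenFEPair 0).hf_modif_FE x⁻¹ (inv_pos.mpr hx)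
    have h3 : (HurwitzZeta.hurwitzEvenFEPair 0).g_modif x⁻¹ =
        (HurwitzZeta.hurwitzEvenFEPair 0).f_modif x⁻¹ := by
      have : (HurwitzZeta.hurwitzEvenFEPair 0).g_modif =
        (HurwitzZeta.hurwitzEvenFEPair 0).symm.f_modif := by
          simp [WeakFEPair.g_modif, WeakFEPair.f_modif, WeakFEPair.symm]
      rw [this, HurwitzZeta.hurwitzEvenFEPair_zero_symm]
    rw [h3, fmod_of_gt h1] at h2
    have h4 : (1 : ℝ) / x⁻¹ = x := by simp
    rw [h4] at h2
    rw [h2]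
    have h5 : ¬ (1 < x) := not_lt.mpr h.le
    simp only [FF, Set.indicator, Set.mem_Ioi, h5, h1, if_true, if_false, zero_add]
    congr 1
    simp only [HurwitzZeta.hurwitzEvenFEPair, one_mul]
    rw [Real.inv_rpow hx.le, ← Real.rpow_neg hx.le, ofReal_cpow hx.le]
    push_cast; rfl

lemma FF_conv (s : ℂ) : MellinConvergent FF s := by
  have h := ((HurwitzZeta.hurwitzEvenFEPair 0).isStrongFEPair_toStrongFEPair.hasMellin s).1
  have h2 := h.mono_set (Set.Ioi_subset_Ioi zero_le_one)
  have h3 : MeasureTheory.IntegrableOn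
    (fun t : ℝ => (t : ℂ) ^ (s - 1) • (Psi t : ℂ)) (Set.Ioi 1) :=
    h2.congr_fun (fun x hx => by
      simp only
      rw [← fmod_of_gt hx]; rfl) measurableSet_Ioi
  have h4 := (MeasureTheory.integrable_indicator_iff measurableSet_Ioi).mpr h3
  refine (h4.integrableOn (s := Set.Ioi 0)).congr_fun (fun x hx => ?_) measurableSet_Ioi
  simp only [FF, Set.indicator]
  split_ifs <;> simp

lemma exp_img : (fun u : ℝ => Real.exp (2 * u)) '' (Set.Ioi 0) = Set.Ioi 1 := by
  ext x
  simp only [Set.mem_image, Set.mem_Ioi]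
  constructor
  · rintro ⟨u, hu, rfl⟩
    exact Real.one_lt_exp_iff.mpr (by linarith)
  · intro hx
    refine ⟨Real.log x / 2, by have := Real.log_pos hx; linarith, ?_⟩
    rw [mul_div_cancel₀ _ two_ne_zero, Real.exp_log (by linarith)]

lemma exp_der : ∀ x ∈ Set.Ioi (0 : ℝ), HasDerivWithinAt (fun u : ℝ => Real.exp (2 * u))
    (Real.exp (2 * x) * 2) (Set.Ioi 0) x := fun x _ => by
  have h : HasDerivAt (fun u : ℝ => 2 * u) 2 x := by simpa using (hasDerivAt_id x).const_mul 2
  exact (h.exp).hasDerivWithinAt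

lemma exp_inj : Set.InjOn (fun u : ℝ => Real.exp (2 * u)) (Set.Ioi 0) := by
  intro a _ b _ h
  have := Real.exp_injective h
  linarith

lemma exp_aux (z : ℂ) (u : ℝ) : |Real.exp (2 * u) * 2| •
    ((Real.exp (2 * u) : ℂ) ^ ((1 / 4 + z / 2 : ℂ) - 1) • (Psi (Real.exp (2 * u)) : ℂ))
    = 2 * ((Kk u : ℂ) * cexp (z * u)) := by
  rw [abs_of_pos (by positivity), Kk]
  rw [ofReal_exp, ← ofReal_exp, cpow_def_of_ne_zero (by exact_mod_cast (Real.exp_pos _).ne'),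
    ← ofReal_log (Real.exp_pos _).le, Real.log_exp]
  simp only [real_smul, smul_eq_mul]
  push_cast
  have : cexp (2 * u) * cexp (2 * ↑u * (1 / 4 + z / 2 - 1)) = cexp (u / 2) * cexp (z * u) := by
    rw [← Complex.exp_add, ← Complex.exp_add]; congr 1; ring
  linear_combination 2 * (Psi (Real.exp (2 * u)) : ℂ) * this

lemma FF_int (z : ℂ) : MeasureTheory.IntegrableOn (fun u : ℝ => (Kk u : ℂ) * cexp (z * u))
    (Set.Ioi 0) ∧ mellin FF (1 / 4 + z / 2)
      = 2 * ∫ u in Set.Ioi (0 : ℝ), (Kk u : ℂ) * cexp (z * u) := by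
  have hm : mellin FF (1 / 4 + z / 2) = ∫ x in Set.Ioi (1 : ℝ),
      (x : ℂ) ^ ((1 / 4 + z / 2 : ℂ) - 1) • (Psi x : ℂ) := by
    have h1 : (Set.Ioi (1 : ℝ)) = Set.Ioi 0 ∩ Set.Ioi 1 := by
      ext x; simp only [Set.mem_Ioi, Set.mem_inter_iff]
      exact ⟨fun h => ⟨by linarith, h⟩, fun h => h.2⟩
    rw [mellin, h1, ← MeasureTheory.setIntegral_indicator measurableSet_Ioi]
    congr 1; ext x
    simp only [FF, Set.indicator]; split_ifs <;> simp
  have hi : MeasureTheory.IntegrableOn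
      (fun x : ℝ => (x : ℂ) ^ ((1 / 4 + z / 2 : ℂ) - 1) • (Psi x : ℂ)) (Set.Ioi 1) := by
    refine ((FF_conv (1 / 4 + z / 2)).mono_set (Set.Ioi_subset_Ioi zero_le_one)).congr_fun
      (fun x hx => ?_) measurableSet_Ioi
    have hx' : 1 < x := hx
    simp [FF, hx']
  rw [← exp_img, MeasureTheory.integrableOn_image_iff_integrableOn_abs_deriv_smul
    measurableSet_Ioi exp_der exp_inj] at hi
  rw [← exp_img, MeasureTheory.integral_image_eq_integral_abs_deriv_smul
    measurableSet_Ioi exp_der exp_inj] at hm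
  simp_rw [exp_aux z] at hi hm
  constructor
  · have := hi.const_mul (1 / 2 : ℂ)
    refine MeasureTheory.IntegrableOn.congr_fun this (fun x _ => ?_) measurableSet_Ioi
    ring
  · rw [hm, MeasureTheory.integral_const_mul]

theorem L0_int (z : ℂ) : completedRiemannZeta₀ (1 / 2 + z)
    = ∫ u in Set.Ioi (0 : ℝ), (Kk u : ℂ) * (cexp (z * u) + cexp (-(z * u))) := by
  have h1 : completedRiemannZeta₀ (1 / 2 + z)
      = (mellin FF (1 / 4 + z / 2) + mellin FF (1 / 4 + (-z) / 2)) / 2 := by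
    rw [completedRiemannZeta₀, HurwitzZeta.completedHurwitzZetaEven₀, WeakFEPair.Λ₀]
    congr 1
    have e1 : mellin (HurwitzZeta.hurwitzEvenFEPair 0).f_modif ((1 / 2 + z) / 2)
      = mellin (fun x => FF x + (x : ℂ) ^ (-(1 / 2) : ℂ) • FF x⁻¹) ((1 / 2 + z) / 2) := by
      refine MeasureTheory.setIntegral_congr_fun measurableSet_Ioi (fun x hx => ?_)
      simp only; rw [fmod_eq hx]
    have e2 : mellin (fun x : ℝ => (x : ℂ) ^ (-(1 / 2) : ℂ) • FF x⁻¹) ((1 / 2 + z) / 2)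
      = mellin FF (1 / 4 + (-z) / 2) := by
      rw [mellin_cpow_smul, mellin_comp_inv]; congr 1; ring
    have e3 : MellinConvergent (fun x : ℝ => (x : ℂ) ^ (-(1 / 2) : ℂ) • FF x⁻¹)
        ((1 / 2 + z) / 2) := by
      rw [MellinConvergent.cpow_smul]
      have := (MellinConvergent.comp_rpow (f := FF) (s := (1 / 2 + z) / 2 + -(1 / 2))
        (a := -1) (by norm_num)).mpr (FF_conv _)
      simpa [Real.rpow_neg_one] using this
    rw [e1, (hasMellin_add (FF_conv _) e3).2, e2]
    congr 2; ring
  rw [h1, (FF_int z).2, (FF_int (-z)).2]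
  simp_rw [mul_add]
  have h2 := (FF_int (-z)).1
  simp_rw [neg_mul] at h2 ⊢
  rw [MeasureTheory.integral_add (FF_int z).1 h2]
  ring

lemma Kk_hasSum {x : ℝ} (hx : 0 < x) : HasSum (fun n : ℤ => if n = 0 then 0 else
    Real.exp (-Real.pi * (n : ℝ) ^ 2 * x)) (Psi x) := by
  have := HurwitzZeta.hasSum_int_evenKernel₀ 0 hx
  simpa [Psi] using this

lemma Psi_nonneg {x : ℝ} (hx : 0 < x) : 0 ≤ Psi x :=
  (Kk_hasSum hx).nonneg (fun n => by split_ifs <;> positivity)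

lemma Kk_nonneg (u : ℝ) : 0 ≤ Kk u :=
  mul_nonneg (Psi_nonneg (Real.exp_pos _)) (Real.exp_pos _).le

lemma L0_conj (s : ℂ) : completedRiemannZeta₀ ((starRingEnd ℂ) s)
    = (starRingEnd ℂ) (completedRiemannZeta₀ s) := by
  have h : s = 1 / 2 + (s - 1 / 2) := by ring
  have h2 : (starRingEnd ℂ) s = 1 / 2 + (starRingEnd ℂ) (s - 1 / 2) := by
    rw [map_sub, show (starRingEnd ℂ) (1 / 2) = 1 / 2 by rw [map_div₀, map_one, map_ofNat]]; ring
  rw [h2, L0_int]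
  conv_rhs => rw [h, L0_int]
  rw [← integral_conj]
  congr 1; ext u
  simp [← Complex.exp_conj]

lemma L0_bound {σ : ℝ} {z : ℂ} (h : |z.re| ≤ σ) : ‖completedRiemannZeta₀ (1 / 2 + z)‖
    ≤ ∫ u in Set.Ioi (0 : ℝ), Kk u * (Real.exp (σ * u) + Real.exp (σ * u)) := by
  rw [L0_int]
  apply MeasureTheory.norm_integral_le_of_norm_le
  · have h2 := (FF_int (σ : ℂ)).1.norm
    refine MeasureTheory.IntegrableOn.congr_fun (h2.add h2) (fun x _ => ?_) measurableSet_Ioi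
    simp [Complex.norm_exp, abs_of_nonneg (Kk_nonneg x)]; ring
  · filter_upwards [MeasureTheory.ae_restrict_mem measurableSet_Ioi] with u hu
    have hu' : 0 < u := hu
    rw [norm_mul, norm_real, Real.norm_eq_abs, abs_of_nonneg (Kk_nonneg u)]
    apply mul_le_mul_of_nonneg_left _ (Kk_nonneg u)
    refine (norm_add_le _ _).trans ?_
    rw [Complex.norm_exp, Complex.norm_exp]
    simp only [neg_re, mul_re, ofReal_re, ofReal_im, mul_zero, sub_zero]
    obtain ⟨h1, h2⟩ := abs_le.mp h
    gcongr
    nlinarith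

lemma chi_diff : Differentiable ℂ chi := by
  unfold chi
  have := differentiable_completedZeta₀
  fun_prop

lemma chi_one_sub (s : ℂ) : chi (1 - s) = chi s := by
  unfold chi; rw [completedRiemannZeta₀_one_sub]; ring

lemma chi_conj (s : ℂ) : chi ((starRingEnd ℂ) s) = (starRingEnd ℂ) (chi s) := by
  unfold chi; rw [L0_conj]; simp

lemma chi_eq {s : ℂ} (h0 : s ≠ 0) (h1 : s ≠ 1) : chi s = s * (s - 1) * completedRiemannZeta s := by
  unfold chi; rw [completedRiemannZeta_eq]
  have : 1 - s ≠ 0 := sub_ne_zero.mpr h1.symm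
  field_simp
  ring

lemma chi_eq' {s : ℂ} (h0 : 0 < s.re) (h1 : s ≠ 1) :
    chi s = s * (s - 1) * (Gammaℝ s * riemannZeta s) := by
  have hs : s ≠ 0 := by rintro rfl; simp at h0
  rw [chi_eq hs h1, riemannZeta_def_of_ne_zero hs, mul_div_cancel₀]
  exact Gammaℝ_ne_zero_of_re_pos h0

lemma chi_ne_zero {s : ℂ} (h : 1 ≤ s.re) : chi s ≠ 0 := by
  by_cases h1 : s = 1
  · subst h1; simp [chi]
  have hs : s ≠ 0 := by rintro rfl; simp at h; linarith
  rw [chi_eq' (by linarith) h1]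
  exact mul_ne_zero (mul_ne_zero hs (sub_ne_zero.mpr h1)) (mul_ne_zero
    (Gammaℝ_ne_zero_of_re_pos (by linarith)) (riemannZeta_ne_zero_of_one_le_re h))

lemma zeta_le {σ : ℝ} (hσ : 1 < σ) : ∃ M : ℝ, 0 ≤ M ∧ ∀ s : ℂ, σ ≤ s.re →
    ‖riemannZeta s‖ ≤ M ∧ 1 ≤ M * ‖riemannZeta s‖ := by
  have hsum : Summable (fun n : ℕ => 1 / (n : ℝ) ^ σ) := Real.summable_one_div_nat_rpow.mpr hσ
  refine ⟨∑' n : ℕ, 1 / (n : ℝ) ^ σ, tsum_nonneg (fun n => by positivity), fun s hs => ?_⟩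
  have hs1 : 1 < s.re := by linarith
  have key : ∀ f : ℕ → ℂ, (∀ n, ‖f n‖ ≤ 1) → ‖LSeries f s‖ ≤ ∑' n : ℕ, 1 / (n : ℝ) ^ σ := by
    intro f hf
    refine tsum_of_norm_bounded hsum.hasSum (fun n => ?_)
    rw [LSeries.norm_term_eq]
    split_ifs with hn
    · positivity
    · have hn1 : (1 : ℝ) ≤ n := by exact_mod_cast Nat.one_le_iff_ne_zero.mpr hn
      have h2 : (n : ℝ) ^ σ ≤ (n : ℝ) ^ s.re := Real.rpow_le_rpow_of_exponent_le hn1 hs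
      have h3 : 0 < (n : ℝ) ^ σ := by positivity
      gcongr
      exact hf n
  have e1 := ArithmeticFunction.LSeries_zeta_eq_riemannZeta hs1
  have e2 := ArithmeticFunction.LSeries_zeta_mul_Lseries_moebius hs1
  have b1 : ‖riemannZeta s‖ ≤ ∑' n : ℕ, 1 / (n : ℝ) ^ σ := by
    rw [← e1]; apply key
    intro n
    by_cases hn : n = 0 <;> simp [ArithmeticFunction.zeta_apply, hn]
  refine ⟨b1, ?_⟩
  rw [e1] at e2
  have b2 := key (fun n => (ArithmeticFunction.moebius n : ℂ)) (fun n => by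
    have := ArithmeticFunction.abs_moebius_le_one (n := n)
    rw [Complex.norm_intCast]; exact_mod_cast this)
  have e3 : ‖riemannZeta s‖ * ‖LSeries (fun n => (ArithmeticFunction.moebius n : ℂ)) s‖ = 1 := by
    rw [← norm_mul, e2, norm_one]
  nlinarith [norm_nonneg (riemannZeta s)]

lemma norm_Gamma_le' {s : ℂ} (hs : 0 < s.re) : ‖Complex.Gamma s‖ ≤ Real.Gamma s.re := by
  rw [Complex.Gamma_eq_integral hs, Real.Gamma_eq_integral hs]
  unfold Complex.GammaIntegral
  apply MeasureTheory.norm_integral_le_of_norm_le (Real.GammaIntegral_convergent hs)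
  filter_upwards [MeasureTheory.ae_restrict_mem measurableSet_Ioi] with x hx
  rw [norm_mul, norm_real, Complex.norm_cpow_eq_rpow_re_of_pos hx]
  simp [abs_of_pos (Real.exp_pos _)]

lemma Gamma_bdd {a b : ℝ} (ha : 0 < a) : ∃ M : ℝ, ∀ s : ℂ, a ≤ s.re → s.re ≤ b →
    ‖Complex.Gamma s‖ ≤ M := by
  have hc : ContinuousOn Real.Gamma (Set.Icc a b) := fun x hx =>
    (Real.differentiableAt_Gamma (fun m => by
      have := hx.1; have : (0 : ℝ) ≤ m := by positivity
      intro h; linarith)).continuousAt.continuousWithinAt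
  obtain ⟨M, hM⟩ := isCompact_Icc.exists_bound_of_continuousOn hc
  refine ⟨M, fun s h1 h2 => (norm_Gamma_le' (by linarith)).trans ?_⟩
  exact (le_abs_self _).trans (hM _ ⟨h1, h2⟩)

lemma norm_sin_le' (z : ℂ) : ‖Complex.sin z‖ ≤ Real.exp |z.im| := by
  unfold Complex.sin
  rw [norm_div, norm_mul, norm_I, mul_one, Complex.norm_ofNat, div_le_iff₀ two_pos]
  refine (norm_sub_le _ _).trans ?_
  rw [Complex.norm_exp, Complex.norm_exp]
  have h1 : Real.exp (-z * I).re ≤ Real.exp |z.im| := by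
    simp; exact le_abs_self _
  have h2 : Real.exp (z * I).re ≤ Real.exp |z.im| := by
    simp; exact neg_le_abs _
  linarith

/-- lower bound for Gamma in a strip -/
lemma Gamma_lower {a b : ℝ} (hb : b < 2) : ∃ M : ℝ, ∀ w : ℂ, a ≤ w.re → w.re ≤ b →
    1 ≤ |w.im| → 1 ≤ M * Real.exp (Real.pi * |w.im|) * ‖Complex.Gamma w‖ := by
  obtain ⟨M, hM⟩ := Gamma_bdd (a := 2 - b) (b := 2 - a) (by linarith)
  refine ⟨M, fun w h1 h2 h3 => ?_⟩
  have e1 := Complex.Gamma_mul_Gamma_one_sub w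
  have hw : 1 - w ≠ 0 := by
    intro h
    have : w.im = 0 := by
      have := congrArg Complex.im h; simpa using this
    rw [this] at h3; simp at h3; linarith
  have e2 := Complex.Gamma_add_one (1 - w) hw
  have hg := hM (1 - w + 1) (by simp; linarith) (by simp; linarith)
  have hn1 : 1 ≤ ‖1 - w‖ := by
    refine h3.trans ?_
    have := Complex.abs_im_le_norm (1 - w); simpa using this
  have hg1 : ‖Complex.Gamma (1 - w)‖ ≤ M := by
    rw [e2, norm_mul] at hg
    nlinarith [norm_nonneg (Complex.Gamma (1 - w))]
  have hM0 : 0 ≤ M := (norm_nonneg _).trans hg1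
  have hs0 : Complex.sin (Real.pi * w) ≠ 0 := by
    rw [Complex.sin_ne_zero_iff]
    intro k hk
    have : (w.im : ℝ) = 0 := by
      have hh : w = k := mul_left_cancel₀ (ofReal_ne_zero.mpr Real.pi_ne_zero)
        (by rw [hk]; ring)
      rw [hh]; simp
    rw [this] at h3; simp at h3; linarith
  have e3 : Complex.Gamma w * Complex.Gamma (1 - w) * Complex.sin (Real.pi * w) = Real.pi := by
    rw [e1, div_mul_cancel₀ _ hs0]
  have e4 : ‖Complex.Gamma w‖ * ‖Complex.Gamma (1 - w)‖ * ‖Complex.sin (Real.pi * w)‖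
      = Real.pi := by
    rw [← norm_mul, ← norm_mul, e3, norm_real, Real.norm_eq_abs, abs_of_pos Real.pi_pos]
  have hs := norm_sin_le' (Real.pi * w)
  have : |((Real.pi : ℂ) * w).im| = Real.pi * |w.im| := by
    simp [abs_mul, abs_of_pos Real.pi_pos]
  rw [this] at hs
  have hpi : 1 ≤ Real.pi := by linarith [Real.pi_gt_three]
  calc (1 : ℝ) ≤ ‖Complex.Gamma w‖ * ‖Complex.Gamma (1 - w)‖ * ‖Complex.sin (Real.pi * w)‖ := by
        rw [e4]; exact hpi
    _ ≤ ‖Complex.Gamma w‖ * M * Real.exp (Real.pi * |w.im|) := by gcongr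
    _ = _ := by ring

lemma beta_bdd {a : ℝ} (ha : 0 < a) : ∃ M : ℝ, ∀ u : ℂ, 1 ≤ u.re →
    ‖Complex.Gamma u‖ ≤ M * ‖Complex.Gamma (u + a)‖ := by
  have hint : IntervalIntegrable (fun x : ℝ => (1 - x) ^ (a - 1)) MeasureTheory.volume 0 1 := by
    have := (intervalIntegral.intervalIntegrable_rpow' (a := 0) (b := 1) (r := a - 1)
      (by linarith)).comp_sub_left 1
    simpa using this.symm
  have hG : 0 < Real.Gamma a := Real.Gamma_pos_of_pos ha
  refine ⟨(∫ x in (0:ℝ)..1, (1 - x) ^ (a - 1)) / Real.Gamma a, fun u hu => ?_⟩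
  have e := Complex.Gamma_mul_Gamma_eq_betaIntegral (s := u) (t := a) (by linarith) (by simpa)
  have hb : ‖Complex.betaIntegral u a‖ ≤ ∫ x in (0:ℝ)..1, (1 - x) ^ (a - 1) := by
    unfold Complex.betaIntegral
    apply intervalIntegral.norm_integral_le_of_norm_le zero_le_one _ hint
    filter_upwards [MeasureTheory.compl_mem_ae_iff.mpr
      (MeasureTheory.measure_singleton (1 : ℝ))] with x hx1 hx
    have hx2 : 0 < x := hx.1
    have hx3 : x < 1 := lt_of_le_of_ne hx.2 hx1
    rw [norm_mul, Complex.norm_cpow_eq_rpow_re_of_pos hx2,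
      show (1 : ℂ) - x = ((1 - x : ℝ) : ℂ) by push_cast; ring,
      Complex.norm_cpow_eq_rpow_re_of_pos (by linarith)]
    have : x ^ (u - 1).re ≤ 1 := Real.rpow_le_one hx2.le hx3.le (by simp; linarith)
    have h5 : 0 ≤ (1 - x) ^ (a - 1) := Real.rpow_nonneg (by linarith) _
    simpa using mul_le_mul_of_nonneg_right this h5
  have e2 : ‖Complex.Gamma u‖ * Real.Gamma a
      = ‖Complex.Gamma (u + a)‖ * ‖Complex.betaIntegral u a‖ := by
    rw [← norm_mul, ← e, norm_mul, Complex.Gamma_ofReal, norm_real, Real.norm_eq_abs,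
      abs_of_pos hG]
  rw [div_mul_eq_mul_div, le_div_iff₀ hG, e2, mul_comm]
  gcongr

lemma norm_Gammaℝ {s : ℂ} : ‖Gammaℝ s‖ = Real.pi ^ (-s.re / 2) * ‖Complex.Gamma (s / 2)‖ := by
  rw [Gammaℝ_def, norm_mul, Complex.norm_cpow_eq_rpow_re_of_pos Real.pi_pos]
  congr 2
  simp

lemma norm_chi {s : ℂ} (h0 : 0 < s.re) (h1 : s ≠ 1) : ‖chi s‖ =
    ‖s‖ * ‖s - 1‖ * (Real.pi ^ (-s.re / 2) * ‖Complex.Gamma (s / 2)‖ * ‖riemannZeta s‖) := by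
  rw [chi_eq' h0 h1, norm_mul, norm_mul, norm_mul, norm_Gammaℝ]

lemma ne_one_of {s : ℂ} (h : 1 < s.re) : s ≠ 1 := by
  rintro rfl; simp at h

lemma norm_le_of_re {s : ℂ} {x : ℝ} (h : 0 ≤ s.re) (hx : 0 ≤ x) : ‖s‖ ≤ ‖s + x‖ := by
  rw [Complex.norm_def, Complex.norm_def]
  apply Real.sqrt_le_sqrt
  rw [normSq_apply, normSq_apply]
  simp
  nlinarith

lemma R_right {a : ℝ} (ha : 0 < a) : ∃ M : ℝ, ∀ s : ℂ, 2 ≤ s.re →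
    ‖chi s‖ ≤ M * ‖chi (s + 2 * a)‖ := by
  obtain ⟨Mb, hMb⟩ := beta_bdd ha
  obtain ⟨Mz, hMz0, hMz⟩ := zeta_le (σ := 2) (by norm_num)
  refine ⟨Real.pi ^ a * Mb * (Mz * Mz), fun s hs => ?_⟩
  have hv : (s + 2 * a).re = s.re + 2 * a := by simp
  rw [norm_chi (by linarith) (ne_one_of (by linarith)),
    norm_chi (by rw [hv]; linarith) (ne_one_of (by rw [hv]; linarith))]
  have h1 : ‖s‖ ≤ ‖s + 2 * a‖ := by
    have := norm_le_of_re (s := s) (x := 2 * a) (by linarith) (by linarith)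
    simpa using this
  have h2 : ‖s - 1‖ ≤ ‖s + 2 * a - 1‖ := by
    have := norm_le_of_re (s := s - 1) (x := 2 * a) (by simp; linarith) (by linarith)
    rw [show s + 2 * a - 1 = s - 1 + 2 * a by ring]
    simpa using this
  have h3 := hMb (s / 2) (by simp; linarith)
  rw [show s / 2 + (a : ℂ) = (s + 2 * a) / 2 by ring] at h3
  have h4 := (hMz s hs).1
  have h5 := (hMz (s + 2 * a) (by rw [hv]; linarith)).2
  have h6 : Real.pi ^ (-s.re / 2) = Real.pi ^ a * Real.pi ^ (-(s + 2 * a).re / 2) := by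
    rw [← Real.rpow_add Real.pi_pos, hv]; congr 1; ring
  have hMb0 : 0 ≤ Mb * ‖Complex.Gamma ((s + 2 * a) / 2)‖ := (norm_nonneg _).trans h3
  have h7 : ‖riemannZeta s‖ ≤ Mz * (Mz * ‖riemannZeta (s + 2 * a)‖) := by nlinarith
  calc _ ≤ ‖s + 2 * a‖ * ‖s + 2 * a - 1‖ * ((Real.pi ^ a * Real.pi ^ (-(s + 2 * a).re / 2))
        * (Mb * ‖Complex.Gamma ((s + 2 * a) / 2)‖) * (Mz * (Mz * ‖riemannZeta (s + 2 * a)‖))) := by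
          rw [h6]; gcongr
    _ = _ := by ring

lemma L0_bdd (σ : ℝ) : ∃ M : ℝ, 0 ≤ M ∧ ∀ s : ℂ, |s.re - 1 / 2| ≤ σ →
    ‖completedRiemannZeta₀ s‖ ≤ M := by
  refine ⟨|∫ u in Set.Ioi (0 : ℝ), Kk u * (Real.exp (σ * u) + Real.exp (σ * u))|, abs_nonneg _,
    fun s hs => le_trans ?_ (le_abs_self _)⟩
  have := L0_bound (σ := σ) (z := s - 1 / 2) (by simpa using hs)
  simpa using this

lemma R_left {e : ℝ} {s : ℂ} (hs : s.re = -e) :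
    ‖chi s‖ = ‖chi (s + (1 + 2 * e : ℝ))‖ := by
  have : (starRingEnd ℂ) (1 - s) = s + (1 + 2 * e : ℝ) := by
    apply Complex.ext <;> simp [hs]; ring
  rw [← this, chi_conj, chi_one_sub, Complex.norm_conj]

lemma R_strip {e : ℝ} (he : 0 < e) (he2 : e ≤ 1 / 4) : ∃ K : ℝ, ∀ s : ℂ, -e ≤ s.re → s.re ≤ 2 →
    2 ≤ |s.im| → ‖chi s‖ ≤ K * Real.exp (5 * Real.exp (1 * |s.im|)) * ‖chi (s + (1 + 2 * e : ℝ))‖ := by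
  obtain ⟨M0, hM00, hM0⟩ := L0_bdd 3
  obtain ⟨Mg, hMg⟩ := Gamma_lower (a := 1 / 2) (b := 7 / 4) (by norm_num)
  obtain ⟨Mz, hMz0, hMz⟩ := zeta_le (σ := 1 + e) (by linarith)
  refine ⟨(1 + 32 * M0) * (Real.pi ^ (2 : ℝ) * Mg * Mz), fun s h1 h2 h3 => ?_⟩
  set t := |s.im| with ht
  have ht0 : 0 ≤ t := abs_nonneg _
  have hpi := Real.pi_gt_three
  have hpi2 := Real.pi_lt_d2
  have A1 : ‖chi s‖ ≤ (1 + 32 * M0) * Real.exp t := by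
    have hn : ‖s‖ ≤ t + 4 := by
      refine (Complex.norm_le_abs_re_add_abs_im s).trans ?_
      have : |s.re| ≤ 4 := abs_le.mpr ⟨by linarith, by linarith⟩
      linarith
    have hn2 : ‖s - 1‖ ≤ t + 4 := by
      refine (Complex.norm_le_abs_re_add_abs_im (s - 1)).trans ?_
      have : |(s - 1).re| ≤ 4 := abs_le.mpr ⟨by simp; linarith, by simp; linarith⟩
      have h4 : |(s - 1).im| = t := by simp [ht]
      linarith
    have hb := hM0 s (abs_le.mpr ⟨by linarith, by linarith⟩)
    have hq := Real.quadratic_le_exp_of_nonneg ht0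
    have hsq : (t + 4) * (t + 4) ≤ 32 * Real.exp t := by nlinarith
    calc ‖chi s‖ ≤ ‖s‖ * ‖s - 1‖ * ‖completedRiemannZeta₀ s‖ + 1 := by
          unfold chi; refine (norm_add_le _ _).trans ?_
          rw [norm_mul, norm_mul, norm_one]
      _ ≤ (t + 4) * (t + 4) * M0 + 1 := by gcongr
      _ ≤ (32 * Real.exp t) * M0 + Real.exp t := by
          gcongr; exact Real.one_le_exp ht0
      _ = _ := by ring
  have hvr : (s + (1 + 2 * e : ℝ)).re = s.re + 1 + 2 * e := by simp; ring
  have hvi : (s + (1 + 2 * e : ℝ)).im = s.im := by simp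
  have A2 : 1 ≤ (Real.pi ^ (2 : ℝ) * Mg * Mz) * Real.exp (Real.pi * t)
      * ‖chi (s + (1 + 2 * e : ℝ))‖ := by
    set v := s + (1 + 2 * e : ℝ) with hv
    rw [norm_chi (by rw [hvr]; linarith) (ne_one_of (by rw [hvr]; linarith))]
    have g1 : 1 ≤ ‖v‖ := by
      refine le_trans ?_ (Complex.abs_im_le_norm v); rw [hvi]; linarith
    have g2 : 1 ≤ ‖v - 1‖ := by
      refine le_trans ?_ (Complex.abs_im_le_norm (v - 1)); rw [sub_im, hvi]; simp; linarith
    have hi2 : |(v / 2).im| = t / 2 := by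
      simp [hvi, abs_div, ht]
    have g3 := hMg (v / 2) (by simp; linarith) (by simp; linarith) (by rw [hi2]; linarith)
    rw [hi2] at g3
    have g4 := (hMz v (by rw [hvr]; linarith)).2
    have g5 : 1 ≤ Real.pi ^ (2 : ℝ) * Real.pi ^ (-v.re / 2) := by
      rw [← Real.rpow_add Real.pi_pos]
      exact Real.one_le_rpow (by linarith) (by rw [hvr]; linarith)
    have hMg0 : 0 ≤ Mg := by
      by_contra hneg
      have : Mg * Real.exp (Real.pi * (t / 2)) * ‖Complex.Gamma (v / 2)‖ ≤ 0 := by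
        apply mul_nonpos_of_nonpos_of_nonneg _ (norm_nonneg _)
        exact mul_nonpos_of_nonpos_of_nonneg (by linarith) (Real.exp_pos _).le
      linarith
    have g6 : Mg * Real.exp (Real.pi * (t / 2)) * ‖Complex.Gamma (v / 2)‖
      ≤ Mg * Real.exp (Real.pi * t) * ‖Complex.Gamma (v / 2)‖ := by
      gcongr; linarith
    calc (1 : ℝ) = 1 * 1 * (1 * 1 * 1) := by norm_num
      _ ≤ ‖v‖ * ‖v - 1‖ * ((Real.pi ^ (2 : ℝ) * Real.pi ^ (-v.re / 2))
          * (Mg * Real.exp (Real.pi * t) * ‖Complex.Gamma (v / 2)‖) * (Mz * ‖riemannZeta v‖)) := by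
            gcongr; exact g3.trans g6
      _ = _ := by ring
  have A3 : Real.exp t * Real.exp (Real.pi * t) ≤ Real.exp (5 * Real.exp (1 * t)) := by
    rw [← Real.exp_add]; apply Real.exp_le_exp.mpr
    have := Real.add_one_le_exp t
    rw [one_mul]; nlinarith
  have hc0 : 0 ≤ (Real.pi ^ (2 : ℝ) * Mg * Mz) * ‖chi (s + (1 + 2 * e : ℝ))‖ := by
    by_contra hneg
    have : (Real.pi ^ (2 : ℝ) * Mg * Mz) * Real.exp (Real.pi * t)
      * ‖chi (s + (1 + 2 * e : ℝ))‖ ≤ 0 := by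
      have := mul_nonpos_of_nonpos_of_nonneg (not_le.mp hneg).le (Real.exp_pos (Real.pi * t)).le
      linarith
    linarith
  calc ‖chi s‖ ≤ (1 + 32 * M0) * Real.exp t * 1 := by linarith
    _ ≤ (1 + 32 * M0) * Real.exp t * ((Real.pi ^ (2 : ℝ) * Mg * Mz) * Real.exp (Real.pi * t)
      * ‖chi (s + (1 + 2 * e : ℝ))‖) := by gcongr
    _ = (1 + 32 * M0) * ((Real.pi ^ (2 : ℝ) * Mg * Mz) * ‖chi (s + (1 + 2 * e : ℝ))‖)
      * (Real.exp t * Real.exp (Real.pi * t)) := by ring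
    _ ≤ (1 + 32 * M0) * ((Real.pi ^ (2 : ℝ) * Mg * Mz) * ‖chi (s + (1 + 2 * e : ℝ))‖)
      * Real.exp (5 * Real.exp (1 * t)) := by gcongr
    _ = _ := by ring

lemma R_all {e : ℝ} (he : 0 < e) (he2 : e ≤ 1 / 4) {s : ℂ} (hs : -e ≤ s.re) :
    ‖chi s‖ ≤ ‖chi (s + (1 + 2 * e : ℝ))‖ := by
  set R : ℂ → ℂ := fun s => chi s / chi (s + (1 + 2 * e : ℝ)) with hR
  have hvr : ∀ s : ℂ, (s + (1 + 2 * e : ℝ)).re = s.re + 1 + 2 * e := fun s => by simp; ring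
  have hne : ∀ s : ℂ, -e ≤ s.re → chi (s + (1 + 2 * e : ℝ)) ≠ 0 := fun s hs =>
    chi_ne_zero (by rw [hvr]; linarith)
  have hRd : ∀ s : ℂ, -e ≤ s.re → DifferentiableAt ℂ R s := fun s hs => by
    have h1 := chi_diff s
    have h2 : DifferentiableAt ℂ (fun s : ℂ => chi (s + (1 + 2 * e : ℝ))) s :=
      (chi_diff _).comp s (by fun_prop)
    exact h1.div h2 (hne s hs)
  have hRn : ∀ s : ℂ, -e ≤ s.re → ∀ C : ℝ, ‖chi s‖ ≤ C * ‖chi (s + (1 + 2 * e : ℝ))‖ → ‖R s‖ ≤ C :=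
    fun s hs C h => by
      rw [hR]; simp only; rw [norm_div, div_le_iff₀ (norm_pos_iff.mpr (hne s hs))]; exact h
  have hleft : ∀ s : ℂ, s.re = -e → ‖R s‖ ≤ 1 := fun s hs =>
    hRn s hs.ge 1 (by rw [R_left hs, one_mul])
  obtain ⟨M, hM⟩ := R_right (a := (1 + 2 * e) / 2) (by linarith)
  have hright : ∀ s : ℂ, 2 ≤ s.re → ‖R s‖ ≤ max 1 M := fun s hs => by
    refine (hRn s (by linarith) M ?_).trans (le_max_right _ _)
    have := hM s hs
    rw [show s + 2 * (((1 + 2 * e) / 2 : ℝ) : ℂ) = s + (1 + 2 * e : ℝ) by push_cast; ring] at this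
    exact this
  have hstrip : ∀ s : ℂ, -e ≤ s.re → s.re ≤ 2 → ‖R s‖ ≤ max 1 M := fun s h1 h2 => by
    refine PhragmenLindelof.vertical_strip (a := -e) (b := 2) ?_ ?_ ?_ ?_ h1 h2
    · refine DifferentiableOn.diffContOnCl (fun z hz => ?_)
      have hz' : z ∈ re ⁻¹' (Set.Icc (-e) 2) :=
        closure_minimal (Set.preimage_mono Set.Ioo_subset_Icc_self)
          (isClosed_Icc.preimage continuous_re) hz
      exact (hRd z hz'.1).differentiableWithinAt
    · refine ⟨1, ?_, 5, ?_⟩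
      · rw [lt_div_iff₀ (by linarith)]; linarith [Real.pi_gt_three]
      · obtain ⟨K, hK⟩ := R_strip he he2
        rw [Asymptotics.isBigO_iff]
        refine ⟨K, ?_⟩
        rw [Filter.eventually_inf_principal]
        have : ∀ᶠ z in Filter.comap (abs ∘ im) Filter.atTop, 2 ≤ (abs ∘ im) z :=
          Filter.tendsto_comap.eventually (Filter.eventually_ge_atTop 2)
        filter_upwards [this] with z hz hz2
        refine hRn z hz2.1.le _ ?_
        rw [Real.norm_eq_abs, abs_of_pos (Real.exp_pos _)]
        exact hK z hz2.1.le hz2.2.le hz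
    · exact fun z hz => (hleft z hz).trans (le_max_left _ _)
    · exact fun z hz => hright z hz.ge
  have hall : ∀ s : ℂ, -e ≤ s.re → ‖R s‖ ≤ max 1 M := fun s h1 => by
    rcases le_total s.re 2 with h | h
    · exact hstrip s h1 h
    · exact hright s h
  have hfin : ‖R (s + e - e)‖ ≤ 1 := by
    refine PhragmenLindelof.right_half_plane_of_bounded_on_real (f := fun z => R (z - e))
      (z := s + e) ?_ ?_ ?_ ?_ (by simp; linarith)
    · refine DifferentiableOn.diffContOnCl (fun z hz => ?_)
      rw [Complex.closure_setOfPred_lt_re] at hz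
      have hz' : 0 ≤ z.re := hz
      have h1 := hRd (z - e) (by simpa using hz')
      have h2 : DifferentiableAt ℂ (fun z : ℂ => z - (e : ℂ)) z := by fun_prop
      exact (DifferentiableAt.comp (g := R) z h1 h2).differentiableWithinAt
    · refine ⟨1, by norm_num, 0, ?_⟩
      rw [Asymptotics.isBigO_iff]
      refine ⟨max 1 M, ?_⟩
      rw [Filter.eventually_inf_principal]
      refine Filter.Eventually.of_forall (fun z hz => ?_)
      have hz' : 0 < z.re := hz
      simpa using hall (z - e) (by simpa using hz'.le)
    · refine ⟨max 1 M, ?_⟩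
      rw [Filter.eventually_map]
      filter_upwards [Filter.eventually_ge_atTop 0] with x hx
      exact hall (x - e) (by simpa using hx)
    · intro x
      exact hleft _ (by simp)
  rw [add_sub_cancel_right] at hfin
  simp only [hR] at hfin
  rw [norm_div, div_le_one (norm_pos_iff.mpr (hne s hs))] at hfin
  exact hfin

theorem chi_mono {s : ℂ} (hs : 0 ≤ s.re) : ‖chi s‖ ≤ ‖chi (s + 1)‖ := by
  have hc : Filter.Tendsto (fun e : ℝ => ‖chi (s + (1 + 2 * e : ℝ))‖) (nhdsWithin 0 (Set.Ioi 0))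
      (nhds ‖chi (s + (1 + 2 * (0:ℝ) : ℝ))‖) := by
    have : Continuous (fun e : ℝ => ‖chi (s + (1 + 2 * e : ℝ))‖) := by
      have := chi_diff.continuous
      fun_prop
    exact (this.tendsto 0).mono_left nhdsWithin_le_nhds
  rw [show s + (1 + 2 * (0:ℝ) : ℝ) = s + 1 by simp] at hc
  refine ge_of_tendsto hc ?_
  filter_upwards [Ioo_mem_nhdsGT (show (0:ℝ) < 1 / 4 by norm_num)] with e he
  exact R_all he.1 he.2.le (by linarith [he.1])

noncomputable def gg (s : ℂ) : ℂ := (A * s + 3) * (s - 1) ^ 2 * chi (s + 2)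
    - 2 * (s - 1) * (s - 3) * chi (s + 1) - (s + 2) * (s - 3) * chi s

lemma f2_eq (s : ℂ) : f2 s = (s - 2) * gg s := rfl

lemma gg_diff : Differentiable ℂ gg := by
  unfold gg
  have := chi_diff
  have h1 : Differentiable ℂ (fun s => chi (s + 2)) := this.comp (by fun_prop)
  have h2 : Differentiable ℂ (fun s => chi (s + 1)) := this.comp (by fun_prop)
  fun_prop

lemma A_real : A = ((Real.pi / 3 - 1 : ℝ) : ℂ) := by unfold A; push_cast; ring

lemma gg_conj (s : ℂ) : gg ((starRingEnd ℂ) s) = (starRingEnd ℂ) (gg s) := by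
  unfold gg
  rw [A_real]
  have h : ∀ n : ℂ, (starRingEnd ℂ) n = n →
      chi ((starRingEnd ℂ) s + n) = (starRingEnd ℂ) (chi (s + n)) := fun n hn => by
    rw [← chi_conj, map_add, hn]
  rw [h 2 (map_ofNat _ 2), h 1 (map_one _), chi_conj]
  simp only [map_sub, map_mul, map_add, map_pow, conj_ofReal, map_ofNat, map_one]

noncomputable def DD (s : ℂ) : ℂ := chi (s + 2) * (A * s + 3)

lemma DD_conj (s : ℂ) : DD ((starRingEnd ℂ) s) = (starRingEnd ℂ) (DD s) := by
  unfold DD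
  rw [A_real]
  simp only [map_mul, map_add, conj_ofReal, map_ofNat]
  rw [← chi_conj, map_add, map_ofNat]

lemma A_pos : 0 < Real.pi / 3 - 1 := by linarith [Real.pi_gt_three]

lemma As_re {s : ℂ} (hs : 0 ≤ s.re) : 3 ≤ (A * s + 3).re := by
  rw [A_real, add_re, re_ofReal_mul]
  have := A_pos
  simp only [re_ofNat]; nlinarith

lemma As_norm {s : ℂ} (hs : 0 ≤ s.re) : 3 ≤ ‖A * s + 3‖ :=
  (As_re hs).trans (re_le_norm _)

lemma DD_ne {s : ℂ} (hs : 0 ≤ s.re) : DD s ≠ 0 := by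
  refine mul_ne_zero (chi_ne_zero (by simp; linarith)) ?_
  intro h
  have := As_norm hs
  rw [h] at this; simp at this; linarith

lemma gg_norm {s : ℂ} (hs : 0 ≤ s.re) : ‖gg s‖ ≤ (‖A * s + 3‖ * ‖s - 1‖ ^ 2
    + 2 * ‖s - 1‖ * ‖s - 3‖ + ‖s + 2‖ * ‖s - 3‖) * ‖chi (s + 2)‖ := by
  have h1 := chi_mono hs
  have h2 := chi_mono (s := s + 1) (by simp; linarith)
  rw [show s + 1 + 1 = s + 2 by ring] at h2
  unfold gg
  rw [add_mul (‖A * s + 3‖ * ‖s - 1‖ ^ 2 + 2 * ‖s - 1‖ * ‖s - 3‖), add_mul (‖A * s + 3‖ * ‖s - 1‖ ^ 2)]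
  refine (norm_sub_le _ _).trans (add_le_add ((norm_sub_le _ _).trans (add_le_add ?_ ?_)) ?_)
  · simp
  · simp only [norm_mul, Complex.norm_ofNat]; gcongr
  · simp only [norm_mul]; gcongr; linarith

theorem main_abs (ρ : ℂ) (hr : 1 < ρ.re) (hr2 : ρ.re < 2) (hi : 1 < ρ.im) (hz : gg ρ = 0)
    (hb : ∀ t : ℝ, 0 ≤ t → 0 < (gg (1 / 2 + t * I) * (starRingEnd ℂ) (DD (1 / 2 + t * I) *
      ((1 / 2 + t * I - ρ) * (1 / 2 + t * I - (starRingEnd ℂ) ρ)))).re) :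
    {s : ℂ | 1 / 2 ≤ s.re ∧ f2 s = 0} = {2, ρ, (starRingEnd ℂ) ρ} ∧
      deriv f2 2 ≠ 0 ∧ deriv f2 ρ ≠ 0 ∧ deriv f2 ((starRingEnd ℂ) ρ) ≠ 0 := by
  set ρ' := (starRingEnd ℂ) ρ with hρ'
  have hre' : ρ'.re = ρ.re := by simp [hρ']
  have him' : ρ'.im = -ρ.im := by simp [hρ']
  have hne : ρ' ≠ ρ := fun h => by
    have := congrArg Complex.im h; rw [him'] at this; linarith
  have hz' : gg ρ' = 0 := by rw [hρ', gg_conj, hz, map_zero]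
  set k1 := dslope gg ρ with hk1
  have hk1d : Differentiable ℂ k1 := by
    have := (Complex.differentiableOn_dslope (f := gg) (c := ρ) Filter.univ_mem).mpr
      gg_diff.differentiableOn
    exact differentiableOn_univ.mp this
  have e1 : ∀ s, gg s = (s - ρ) * k1 s := fun s => by
    have := sub_smul_dslope gg ρ s
    rw [hz, sub_zero, smul_eq_mul] at this; exact this.symm
  have hk1z : k1 ρ' = 0 := by
    have := e1 ρ'
    rw [hz'] at this
    exact (mul_eq_zero.mp this.symm).resolve_left (sub_ne_zero.mpr hne)
  set k := dslope k1 ρ' with hk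
  have hkd : Differentiable ℂ k := by
    have := (Complex.differentiableOn_dslope (f := k1) (c := ρ') Filter.univ_mem).mpr
      hk1d.differentiableOn
    exact differentiableOn_univ.mp this
  have e2 : ∀ s, gg s = ((s - ρ) * (s - ρ')) * k s := fun s => by
    have := sub_smul_dslope k1 ρ' s
    rw [hk1z, sub_zero, smul_eq_mul] at this
    rw [e1 s, ← this]; ring
  set X : ℂ → ℂ := fun s => k s / DD s with hX
  have hXd : ∀ s : ℂ, 0 ≤ s.re → DifferentiableAt ℂ X s := fun s hs => by
    have h2 : Differentiable ℂ DD := by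
      unfold DD
      have h1 : Differentiable ℂ (fun s => chi (s + 2)) := chi_diff.comp (by fun_prop)
      fun_prop
    exact (hkd s).div (h2 s) (DD_ne hs)
  have hbd : ∀ t : ℝ, 0 < (X (1 / 2 + t * I)).re := by
    have hgen : ∀ s : ℂ, s.re = 1 / 2 → 0 < (gg s * (starRingEnd ℂ) (DD s *
      ((s - ρ) * (s - ρ')))).re → 0 < (X s).re := fun s hs h => by
      have hq : (s - ρ) * (s - ρ') ≠ 0 := by
        refine mul_ne_zero (fun h => ?_) (fun h => ?_)
        · have := congrArg Complex.re h; simp [hs] at this; linarith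
        · have := congrArg Complex.re h; simp only [sub_re, hre', hs, zero_re] at this; linarith
      have hD := DD_ne (s := s) (by rw [hs]; norm_num)
      have e : X s = gg s * (starRingEnd ℂ) (DD s * ((s - ρ) * (s - ρ'))) *
          ((normSq (DD s * ((s - ρ) * (s - ρ'))))⁻¹ : ℝ) := by
        rw [mul_assoc, ← Complex.inv_def, e2 s, hX]
        simp only
        have hq1 := left_ne_zero_of_mul hq
        have hq2 := right_ne_zero_of_mul hq
        field_simp
      rw [e, re_mul_ofReal]
      refine mul_pos h (inv_pos.mpr (normSq_pos.mpr (mul_ne_zero hD hq)))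
    intro t
    rcases le_total 0 t with ht | ht
    · exact hgen _ (by simp) (hb t ht)
    · have h1 := hb (-t) (by linarith)
      have ec : (1 / 2 + ((-t : ℝ) : ℂ) * I) = (starRingEnd ℂ) (1 / 2 + t * I) := by
        apply Complex.ext <;> simp
      apply hgen _ (by simp)
      rw [ec, gg_conj, DD_conj] at h1
      have h2 : ((starRingEnd ℂ) (1 / 2 + t * I) - ρ) * ((starRingEnd ℂ) (1 / 2 + t * I) - ρ')
        = (starRingEnd ℂ) ((1 / 2 + t * I - ρ) * (1 / 2 + t * I - ρ')) := by
        rw [map_mul, map_sub, map_sub, hρ', conj_conj]; ring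
      rw [h2, ← map_mul, ← map_mul, conj_re] at h1
      exact h1
  have hXb : ∀ s : ℂ, 0 ≤ s.re → 2 * ‖ρ‖ + 10 ≤ ‖s‖ → ‖X s‖ ≤ 32 := fun s hs hsn => by
    have hρn : ‖ρ'‖ = ‖ρ‖ := by rw [hρ', Complex.norm_conj]
    have hρ0 := norm_nonneg ρ
    have q1 : ‖s‖ / 2 ≤ ‖s - ρ‖ := by
      have := norm_sub_norm_le s ρ; linarith
    have q2 : ‖s‖ / 2 ≤ ‖s - ρ'‖ := by
      have := norm_sub_norm_le s ρ'; rw [hρn] at this; linarith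
    have a1 : ‖s - 1‖ ≤ 2 * ‖s‖ := by
      have := norm_sub_le s 1; rw [norm_one] at this; linarith
    have a3 : ‖s - 3‖ ≤ 2 * ‖s‖ := by
      have := norm_sub_le s 3; rw [Complex.norm_ofNat] at this; linarith
    have a2 : ‖s + 2‖ ≤ 2 * ‖s‖ := by
      have := norm_add_le s 2; rw [Complex.norm_ofNat] at this; linarith
    have hA := As_norm hs
    have hc : 0 < ‖chi (s + 2)‖ := norm_pos_iff.mpr (chi_ne_zero (by simp; linarith))
    have hg := gg_norm hs
    have hn0 := norm_nonneg s
    have hg2 : ‖gg s‖ ≤ 8 * ‖s‖ ^ 2 * (‖A * s + 3‖ * ‖chi (s + 2)‖) := by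
      refine hg.trans ?_
      have : ‖A * s + 3‖ * ‖s - 1‖ ^ 2 + 2 * ‖s - 1‖ * ‖s - 3‖ + ‖s + 2‖ * ‖s - 3‖
        ≤ 8 * ‖s‖ ^ 2 * ‖A * s + 3‖ := by
        calc _ ≤ ‖A * s + 3‖ * (2 * ‖s‖) ^ 2 + 2 * (2 * ‖s‖) * (2 * ‖s‖)
              + (2 * ‖s‖) * (2 * ‖s‖) := by gcongr
          _ ≤ _ := by nlinarith [sq_nonneg ‖s‖]
      calc _ ≤ 8 * ‖s‖ ^ 2 * ‖A * s + 3‖ * ‖chi (s + 2)‖ := by gcongr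
        _ = _ := by ring
    rw [e2 s, norm_mul, norm_mul] at hg2
    have hDn : ‖DD s‖ = ‖A * s + 3‖ * ‖chi (s + 2)‖ := by
      unfold DD; rw [norm_mul, mul_comm]
    rw [← hDn] at hg2
    have hDp : 0 < ‖DD s‖ := norm_pos_iff.mpr (DD_ne hs)
    simp only [hX]
    rw [norm_div, div_le_iff₀ hDp]
    have h3 : ‖s‖ / 2 * (‖s‖ / 2) * ‖k s‖ ≤ 8 * ‖s‖ ^ 2 * ‖DD s‖ := by
      refine le_trans ?_ hg2
      gcongr
    have hsp : 0 < ‖s‖ ^ 2 := by have : 0 < ‖s‖ := by linarith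
                                 positivity
    have h4 : ‖s‖ ^ 2 * ‖k s‖ ≤ ‖s‖ ^ 2 * (32 * ‖DD s‖) := by nlinarith
    exact le_of_mul_le_mul_left h4 hsp
  set f : ℂ → ℂ := fun z => cexp (-X (z + 1 / 2)) with hf
  have hsh : ∀ z : ℂ, (z + 1 / 2).re = z.re + 1 / 2 := fun z => by simp
  have hfd : DiffContOnCl ℂ f {z | 0 < z.re} := by
    refine DifferentiableOn.diffContOnCl (fun z hz => ?_)
    rw [Complex.closure_setOfPred_lt_re] at hz
    have hz' : 0 ≤ z.re := hz
    have h2 : DifferentiableAt ℂ (fun z : ℂ => z + 1 / 2) z := by fun_prop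
    have h3 := DifferentiableAt.comp (g := X) z (hXd (z + 1 / 2) (by rw [hsh]; linarith)) h2
    exact (h3.neg.cexp).differentiableWithinAt
  have hfb : ∀ z : ℂ, 0 ≤ z.re → 2 * ‖ρ‖ + 11 ≤ ‖z‖ → ‖f z‖ ≤ Real.exp 32 := fun z hz hzn => by
    simp only [hf]
    rw [Complex.norm_exp]
    apply Real.exp_le_exp.mpr
    have : ‖z‖ - ‖(1 / 2 : ℂ)‖ ≤ ‖z + 1 / 2‖ := by
      have := norm_sub_norm_le z (-(1 / 2)); simpa using this
    have hh : ‖(1 / 2 : ℂ)‖ = 1 / 2 := by simp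
    rw [hh] at this
    have h3 := hXb (z + 1 / 2) (by rw [hsh]; linarith) (by linarith)
    have h4 := re_le_norm (-X (z + 1 / 2))
    rw [norm_neg] at h4; linarith
  have hPL : ∀ z : ℂ, 0 ≤ z.re → ‖f z‖ ≤ 1 := fun z hz => by
    refine PhragmenLindelof.right_half_plane_of_bounded_on_real hfd ?_ ?_ ?_ hz
    · refine ⟨1, by norm_num, 0, ?_⟩
      rw [Asymptotics.isBigO_iff]
      refine ⟨Real.exp 32, ?_⟩
      rw [Filter.eventually_inf_principal]
      filter_upwards [tendsto_norm_cobounded_atTop.eventually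
        (Filter.eventually_ge_atTop (2 * ‖ρ‖ + 11))] with z hz hz2
      have hz' : 0 < z.re := hz2
      simpa using hfb z hz'.le hz
    · refine ⟨Real.exp 32, ?_⟩
      rw [Filter.eventually_map]
      filter_upwards [Filter.eventually_ge_atTop (2 * ‖ρ‖ + 11)] with x hx
      have hx0 : 0 ≤ x := by linarith [norm_nonneg ρ]
      exact hfb x (by simpa using hx0) (by rw [norm_real, Real.norm_eq_abs, abs_of_nonneg hx0]; exact hx)
    · intro x
      simp only [hf]
      rw [Complex.norm_exp]
      apply Real.exp_le_one_iff.mpr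
      have := hbd x
      rw [add_comm] at this
      rw [neg_re]; linarith
  have hk0 : ∀ s : ℂ, 1 / 2 ≤ s.re → k s ≠ 0 := fun s hs hks => by
    rcases hs.eq_or_lt with h | h
    · have h1 := hbd s.im
      have : (1 / 2 + (s.im : ℂ) * I) = s := by
        apply Complex.ext <;> simp; linarith
      rw [this] at h1
      simp [hX, hks] at h1
    · have hfs : f (s - 1 / 2) = 1 := by
        simp [hf, hX, hks]
      have hmax : IsMaxOn (norm ∘ f) {z : ℂ | 0 < z.re} (s - 1 / 2) := by
        intro z hz
        have hz' : 0 < z.re := hz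
        simp only [Set.mem_ofPred_eq, Function.comp, hfs, norm_one]
        exact hPL z hz'.le
      have hpc : IsPreconnected {z : ℂ | 0 < z.re} := (convex_halfSpace_re_gt 0).isPreconnected
      have ho : IsOpen {z : ℂ | 0 < z.re} := isOpen_lt continuous_const continuous_re
      have heq := Complex.norm_eqOn_closure_of_isPreconnected_of_isMaxOn hpc ho hfd
        (show s - 1 / 2 ∈ {z : ℂ | 0 < z.re} by
          change 0 < (s - 1 / 2).re
          simp; linarith) hmax
      have h0 : (0 : ℂ) ∈ closure {z : ℂ | 0 < z.re} := by
        rw [Complex.closure_setOfPred_lt_re]; change (0 : ℝ) ≤ (0 : ℂ).re; simp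
      have h1 := heq h0
      simp only [Function.comp, Function.const, hfs, norm_one] at h1
      simp only [hf] at h1
      rw [Complex.norm_exp, Real.exp_eq_one_iff] at h1
      have h2 := hbd 0
      simp only [ofReal_zero, zero_mul, add_zero] at h2
      rw [zero_add, neg_re] at h1
      linarith
  have hder : ∀ (c : ℂ) (m : ℂ → ℂ), Differentiable ℂ m → (∀ s, f2 s = (s - c) * m s) →
      deriv f2 c = m c := fun c m hm h => by
    have h1 : HasDerivAt (fun s => (s - c) * m s) (1 * m c + (c - c) * deriv m c) c :=
      ((hasDerivAt_id c).sub_const c).mul (hm c).hasDerivAt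
    have h2 : f2 = fun s => (s - c) * m s := funext h
    rw [h2, h1.deriv]; ring
  have n1 : (2 : ℂ) - ρ ≠ 0 := fun h => by
    have := congrArg Complex.im h; simp at this; linarith
  have n2 : (2 : ℂ) - ρ' ≠ 0 := fun h => by
    have := congrArg Complex.im h; simp only [sub_im, him', im_ofNat, zero_im] at this; linarith
  have n3 : ρ - ρ' ≠ 0 := sub_ne_zero.mpr hne.symm
  refine ⟨?_, ?_, ?_, ?_⟩
  · ext s
    simp only [Set.mem_ofPred_eq, Set.mem_insert_iff, Set.mem_singleton_iff]
    constructor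
    · rintro ⟨hs, h0⟩
      rw [f2_eq, e2 s] at h0
      simp only [mul_eq_zero, hk0 s hs, or_false, sub_eq_zero] at h0
      exact h0
    · rintro (rfl | rfl | rfl)
      · refine ⟨by norm_num, by simp [f2_eq]⟩
      · exact ⟨by linarith, by rw [f2_eq, hz, mul_zero]⟩
      · exact ⟨by rw [hre']; linarith, by rw [f2_eq, hz', mul_zero]⟩
  · rw [hder 2 gg gg_diff f2_eq, e2]
    exact mul_ne_zero (mul_ne_zero n1 n2) (hk0 _ (by norm_num))
  · rw [hder ρ (fun s => (s - 2) * ((s - ρ') * k s)) (by fun_prop)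
      (fun s => by rw [f2_eq, e2]; ring)]
    exact mul_ne_zero (by rw [← neg_sub]; exact neg_ne_zero.mpr n1)
      (mul_ne_zero n3 (hk0 _ (by linarith)))
  · rw [hder ρ' (fun s => (s - 2) * ((s - ρ) * k s)) (by fun_prop)
      (fun s => by rw [f2_eq, e2]; ring)]
    exact mul_ne_zero (by rw [← neg_sub]; exact neg_ne_zero.mpr n2)
      (mul_ne_zero (sub_ne_zero.mpr hne) (hk0 _ (by rw [hre']; linarith)))

lemma large_poly {x p m : ℝ} (hx : 163.84 ≤ x) (hp : |p - 1.17| ≤ 0.007) (hm : |m - 13.129| ≤ 0.06) :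
    0 < (x - 1/4) * (x - 1/4 + p - m) + x * (2 * p - 1) ∧
    (3 * x + 12.75) ^ 2 * ((x - 1/4 + p - m) ^ 2 + x * (2 * p - 1) ^ 2)
      < (3.023 ^ 2 + 0.04719 ^ 2 * x) * ((x - 1/4) * (x - 1/4 + p - m) + x * (2 * p - 1)) ^ 2 := by
  rw [abs_le] at hp hm
  obtain ⟨y, hy, rfl⟩ : ∃ y : ℝ, 0 ≤ y ∧ x = 163.84 + y := ⟨x - 163.84, by linarith, by ring⟩
  have h1 : (163.84 + y - 0.25) * (163.84 + y - 12.28) + 1.326 * (163.84 + y) ≤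
      (163.84 + y - 1/4) * (163.84 + y - 1/4 + p - m) + (163.84 + y) * (2 * p - 1) := by
    nlinarith
  have h0 : 0 < (163.84 + y - 0.25) * (163.84 + y - 12.28) + 1.326 * (163.84 + y) := by
    have : 0 < (163.84 + y - 0.25) * (163.84 + y - 12.28) := by apply mul_pos <;> linarith
    linarith
  have h2 : (163.84 + y - 1/4 + p - m) ^ 2 + (163.84 + y) * (2 * p - 1) ^ 2 ≤
      (163.84 + y - 12.14) ^ 2 + 1.834 * (163.84 + y) := by
    have e1 : (163.84 + y - 1/4 + p - m) ^ 2 ≤ (163.84 + y - 12.14) ^ 2 := by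
      apply pow_le_pow_left₀ <;> linarith
    have e2 : (2 * p - 1) ^ 2 ≤ 1.834 := by nlinarith
    nlinarith
  refine ⟨by linarith, ?_⟩
  calc _ ≤ (3 * (163.84 + y) + 12.75) ^ 2 * ((163.84 + y - 12.14) ^ 2 + 1.834 * (163.84 + y)) :=
        mul_le_mul_of_nonneg_left h2 (sq_nonneg _)
    _ < (3.023 ^ 2 + 0.04719 ^ 2 * (163.84 + y)) *
        ((163.84 + y - 0.25) * (163.84 + y - 12.28) + 1.326 * (163.84 + y)) ^ 2 := by
        rw [← sub_pos]
        ring_nf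
        positivity
    _ ≤ _ := by
        apply mul_le_mul_of_nonneg_left (pow_le_pow_left₀ h0.le h1 2) (by positivity)

set_option maxHeartbeats 800000 in
lemma large_t (ρ : ℂ) (hp : |ρ.re - 1.17| ≤ 0.007) (hm : |normSq ρ - 13.129| ≤ 0.06) (t : ℝ)
    (ht : 12.8 ≤ t) : 0 < (gg (1/2+t*I) * (starRingEnd ℂ) (DD (1/2+t*I) *
      ((1/2+t*I-ρ)*(1/2+t*I-(starRingEnd ℂ) ρ)))).re := by
  set s : ℂ := 1/2+t*I with hs
  have sre : s.re = 1/2 := by simp [hs]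
  have sim : s.im = t := by simp [hs]
  have hx : 163.84 ≤ t^2 := by nlinarith
  obtain ⟨hN0, hN⟩ := large_poly hx hp hm
  set N := (t^2 - 1/4) * (t^2 - 1/4 + ρ.re - normSq ρ) + t^2 * (2 * ρ.re - 1) with hNd
  set q : ℂ := (s-ρ)*(s-(starRingEnd ℂ) ρ) with hq
  have qre : q.re = -(t^2 - 1/4 + ρ.re - normSq ρ) := by
    simp [hq, sre, sim, normSq_apply]; ring
  have qim : q.im = -(t * (2 * ρ.re - 1)) := by
    simp [hq, sre, sim]; ring
  have hNq : ((s-1)^2 * (starRingEnd ℂ) q).re = N := by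
    rw [mul_re, conj_re, conj_im, qre, qim, pow_two, mul_re, mul_im]
    simp only [sub_re, sub_im, one_re, one_im, sre, sim]
    rw [hNd]; ring
  have hq2 : ‖q‖^2 = (t^2 - 1/4 + ρ.re - normSq ρ)^2 + t^2 * (2 * ρ.re - 1)^2 := by
    rw [← normSq_eq_norm_sq, normSq_apply, qre, qim]; ring
  have hA : 0.04719 ≤ Real.pi / 3 - 1 := by linarith [Real.pi_gt_d6]
  have hAs : 3.023 ^ 2 + 0.04719 ^ 2 * t^2 ≤ ‖A * s + 3‖^2 := by
    rw [← normSq_eq_norm_sq, normSq_apply, A_real]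
    set a := Real.pi / 3 - 1
    have e1 : (((a:ℝ):ℂ) * s + 3).re = a/2 + 3 := by simp [sre]; ring
    have e2 : (((a:ℝ):ℂ) * s + 3).im = a * t := by simp [sim]
    rw [e1, e2]
    have : 0.04719^2 ≤ a^2 := pow_le_pow_left₀ (by norm_num) hA 2
    nlinarith
  have key : (3 * t^2 + 12.75) * ‖q‖ < ‖A * s + 3‖ * N := by
    apply lt_of_pow_lt_pow_left₀ 2 (by positivity)
    rw [mul_pow, mul_pow, hq2]
    refine lt_of_lt_of_le hN ?_
    exact mul_le_mul_of_nonneg_right hAs (sq_nonneg _)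
  have c1 : ‖chi (s+1)‖ ≤ ‖chi (s+2)‖ := by
    have := chi_mono (s := s+1) (by simp [sre]; norm_num)
    rwa [show s + 1 + 1 = s + 2 by ring] at this
  have c0 : ‖chi s‖ ≤ ‖chi (s+2)‖ := (chi_mono (by rw [sre]; norm_num)).trans c1
  have n1 : ‖s - 1‖^2 = t^2 + 1/4 := by
    rw [← normSq_eq_norm_sq, normSq_apply]; simp [sre, sim]; ring
  have n3 : ‖s - 3‖^2 = t^2 + 25/4 := by
    rw [← normSq_eq_norm_sq, normSq_apply]; simp [sre, sim]; ring
  have n2 : ‖s + 2‖^2 = t^2 + 25/4 := by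
    rw [← normSq_eq_norm_sq, normSq_apply]; simp [sre, sim]; ring
  set R : ℂ := 2 * (s - 1) * (s - 3) * chi (s + 1) + (s + 2) * (s - 3) * chi s with hR
  have hRn : ‖R‖ ≤ (3 * t^2 + 12.75) * ‖chi (s+2)‖ := by
    have e1 : ‖2 * (s - 1) * (s - 3) * chi (s + 1)‖ ≤ 2 * (‖s-1‖ * ‖s-3‖) * ‖chi (s+2)‖ := by
      rw [norm_mul, norm_mul, norm_mul]; simp only [Complex.norm_ofNat]
      rw [← mul_assoc 2 _ ‖s-3‖]
      exact mul_le_mul_of_nonneg_left c1 (by positivity)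
    have e2 : ‖(s + 2) * (s - 3) * chi s‖ ≤ (‖s+2‖ * ‖s-3‖) * ‖chi (s+2)‖ := by
      rw [norm_mul, norm_mul]
      exact mul_le_mul_of_nonneg_left c0 (by positivity)
    have e3 : 2 * (‖s-1‖ * ‖s-3‖) + ‖s+2‖ * ‖s-3‖ ≤ 3 * t^2 + 12.75 := by
      have a1 := two_mul_le_add_sq ‖s-1‖ ‖s-3‖
      have a2 := two_mul_le_add_sq ‖s+2‖ ‖s-3‖
      linarith
    calc ‖R‖ ≤ _ := norm_add_le _ _
      _ ≤ _ := add_le_add e1 e2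
      _ = (2 * (‖s-1‖ * ‖s-3‖) + ‖s+2‖ * ‖s-3‖) * ‖chi (s+2)‖ := by ring
      _ ≤ _ := mul_le_mul_of_nonneg_right e3 (norm_nonneg _)
  have hchi : 0 < ‖chi (s+2)‖ := norm_pos_iff.2 (chi_ne_zero (by simp [sre]; norm_num))
  have hAp : 0 < ‖A * s + 3‖ := lt_of_lt_of_le (by norm_num) (As_norm (s := s) (by rw [sre]; norm_num))
  have hg : gg s = DD s * (s-1)^2 - R := by simp only [gg, DD, hR]; ring
  have e : gg s * (starRingEnd ℂ) (DD s * q) = ((‖DD s‖^2 : ℝ) : ℂ) * ((s-1)^2 * (starRingEnd ℂ) q)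
      - R * (starRingEnd ℂ) (DD s * q) := by
    rw [hg, map_mul, ← normSq_eq_norm_sq, ← mul_conj]; ring
  rw [e, sub_re, re_ofReal_mul, hNq]
  have e1 : (R * (starRingEnd ℂ) (DD s * q)).re ≤ ‖R‖ * (‖DD s‖ * ‖q‖) := by
    refine (re_le_norm _).trans ?_
    rw [norm_mul, norm_conj, norm_mul]
  have hD : ‖DD s‖ = ‖chi (s+2)‖ * ‖A * s + 3‖ := by rw [DD, norm_mul]
  have e2 : ‖R‖ * (‖DD s‖ * ‖q‖) ≤ (3 * t^2 + 12.75) * ‖chi (s+2)‖ * (‖DD s‖ * ‖q‖) :=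
    mul_le_mul_of_nonneg_right hRn (by positivity)
  have e3 : ‖chi (s+2)‖ * ‖DD s‖ * ((3 * t^2 + 12.75) * ‖q‖) < ‖chi (s+2)‖ * ‖DD s‖ * (‖A * s + 3‖ * N) :=
    mul_lt_mul_of_pos_left key (by rw [hD]; positivity)
  have e4 : ‖DD s‖^2 * N = ‖chi (s+2)‖ * ‖DD s‖ * (‖A * s + 3‖ * N) := by
    rw [pow_two]; nth_rewrite 2 [hD]; ring
  rw [e4]; linarith

noncomputable def ev : List ℤ → ℂ → ℂ
  | [], _ => 0
  | a :: l, x => a + x * ev l x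

def padd : List ℤ → List ℤ → List ℤ
  | [], q => q
  | a :: p, [] => a :: p
  | a :: p, b :: q => Int.add a b :: padd p q

lemma ev_padd (p q : List ℤ) (x : ℂ) : ev (padd p q) x = ev p x + ev q x := by
  induction p generalizing q with
  | nil => simp [padd, ev]
  | cons a p ih =>
    cases q with
    | nil => simp [padd, ev]
    | cons b q =>
      simp only [padd, ev, ih]
      rw [show Int.add a b = a + b from rfl]; push_cast; ring

def psc (c : ℤ) : List ℤ → List ℤ
  | [] => []
  | a :: p => Int.mul c a :: psc c p

lemma ev_psc (c : ℤ) (p : List ℤ) (x : ℂ) : ev (psc c p) x = c * ev p x := by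
  induction p with
  | nil => simp [psc, ev]
  | cons a p ih =>
    simp only [psc, ev, ih]
    rw [show Int.mul c a = c * a from rfl]; push_cast; ring

def pmul : List ℤ → List ℤ → List ℤ
  | [], _ => []
  | a :: p, q => padd (psc a q) (0 :: pmul p q)

lemma ev_pmul (p q : List ℤ) (x : ℂ) : ev (pmul p q) x = ev p x * ev q x := by
  induction p with
  | nil => simp [pmul, ev]
  | cons a p ih => simp only [pmul, ev_padd, ev_psc, ev, ih]; push_cast; ring

def pgo (a : ℤ) (l : List ℤ) : List ℤ :=
  List.rec (motive := fun _ => ℤ → List ℤ) (fun a => [a]) (fun b _ ih a => Int.add a b :: ih b) l a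

def psh (l : List ℤ) : List ℤ :=
  List.rec (motive := fun _ => List ℤ) [] (fun a _ ih => pgo a ih) l

lemma ev_pgo (a : ℤ) (l : List ℤ) (x : ℂ) : ev (pgo a l) x = a + (x + 1) * ev l x := by
  induction l generalizing a with
  | nil => simp [pgo, ev]
  | cons b l ih =>
    have : pgo a (b :: l) = Int.add a b :: pgo b l := rfl
    rw [this, ev, ev, ih, show Int.add a b = a + b from rfl]; push_cast; ring

lemma ev_psh (l : List ℤ) (x : ℂ) : ev (psh l) x = ev l (x + 1) := by
  induction l with
  | nil => simp [psh, ev]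
  | cons a l ih =>
    have : psh (a :: l) = pgo a (psh l) := rfl
    rw [this, ev_pgo, ih, ev]

def nb (a b : ℤ) : ℤ := if |a| ≤ |b| then |b| + (|a| + 1) / 2 else |a| + (|b| + 1) / 2

lemma nb_aux {a b c : ℝ} (ha : 0 ≤ a) (hab : a ≤ b) (hc : a ≤ 2 * c) : a ^ 2 + b ^ 2 ≤ (b + c) ^ 2 := by
  nlinarith

lemma nb_bound (a b : ℤ) : ‖(a + I * b : ℂ)‖ ≤ nb a b := by
  have e : ‖(a + I * b : ℂ)‖ ^ 2 = (a:ℝ) ^ 2 + (b:ℝ) ^ 2 := by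
    rw [← normSq_eq_norm_sq, normSq_apply]; simp; ring
  unfold nb
  split_ifs with h
  · have h2 : |a| ≤ 2 * ((|a| + 1) / 2) := by omega
    have h3 : (0 : ℤ) ≤ |b| + (|a| + 1) / 2 := by have := abs_nonneg a; have := abs_nonneg b; omega
    apply le_of_sq_le_sq _ (by exact_mod_cast h3)
    rw [e, ← sq_abs (a:ℝ), ← sq_abs (b:ℝ)]
    push_cast
    exact nb_aux (abs_nonneg _) (by exact_mod_cast h) (by exact_mod_cast h2)
  · push Not at h
    have h2 : |b| ≤ 2 * ((|b| + 1) / 2) := by omega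
    have h3 : (0 : ℤ) ≤ |a| + (|b| + 1) / 2 := by have := abs_nonneg a; have := abs_nonneg b; omega
    apply le_of_sq_le_sq _ (by exact_mod_cast h3)
    rw [e, ← sq_abs (a:ℝ), ← sq_abs (b:ℝ), add_comm]
    push_cast
    exact nb_aux (abs_nonneg _) (by exact_mod_cast h.le) (by exact_mod_cast h2)

def hb : List ℤ → ℤ
  | [] => 0
  | a :: l => |a| + (hb l + 1) / 2

lemma half_aux {r : ℤ} {x e : ℂ} (hx : ‖x‖ ≤ 1 / 2) (he : ‖e‖ ≤ r) : ‖x * e‖ ≤ (((r + 1) / 2 : ℤ) : ℝ) := by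
  have h : r ≤ 2 * ((r + 1) / 2) := by omega
  have h' : (r : ℝ) ≤ 2 * (((r + 1) / 2 : ℤ) : ℝ) := by exact_mod_cast h
  rw [norm_mul]
  nlinarith [norm_nonneg x, norm_nonneg e]

lemma hb_bound (l : List ℤ) {x : ℂ} (hx : ‖x‖ ≤ 1 / 2) : ‖ev l x‖ ≤ hb l := by
  induction l with
  | nil => simp [ev, hb]
  | cons a l ih =>
    simp only [ev, hb]
    refine (norm_add_le _ _).trans ?_
    push_cast
    refine add_le_add ?_ (by exact_mod_cast half_aux hx ih)
    rw [Complex.norm_intCast]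

def rb2 : List ℤ → List ℤ → ℤ
  | [], q => hb q
  | a :: p, [] => hb (a :: p)
  | a :: p, b :: q => nb a b + (rb2 p q + 1) / 2

lemma rb2_bound (p q : List ℤ) {x : ℂ} (hx : ‖x‖ ≤ 1 / 2) : ‖ev p x + I * ev q x‖ ≤ rb2 p q := by
  induction p generalizing q with
  | nil => simpa [ev, rb2] using hb_bound q hx
  | cons a p ih =>
    cases q with
    | nil => simpa [rb2, ev] using hb_bound (a :: p) hx
    | cons b q =>
      simp only [rb2]
      have e : ev (a :: p) x + I * ev (b :: q) x = (a + I * b) + x * (ev p x + I * ev q x) := by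
        simp only [ev]; ring
      rw [e]
      refine (norm_add_le _ _).trans ?_
      push_cast
      exact add_le_add (nb_bound a b) (by exact_mod_cast half_aux hx (ih q))

noncomputable def ev2 (p : List ℤ × List ℤ) (x : ℂ) : ℂ := ev p.1 x + I * ev p.2 x
def add2 (p q : List ℤ × List ℤ) : List ℤ × List ℤ := (padd p.1 q.1, padd p.2 q.2)
def sc2 (c : ℤ) (p : List ℤ × List ℤ) : List ℤ × List ℤ := (psc c p.1, psc c p.2)
def con2 (c : ℤ) : List ℤ × List ℤ := ([c], [])
def mul2 (p q : List ℤ × List ℤ) : List ℤ × List ℤ :=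
  (padd (pmul p.1 q.1) (psc (-1) (pmul p.2 q.2)), padd (pmul p.1 q.2) (pmul p.2 q.1))
def sh2 (p : List ℤ × List ℤ) : List ℤ × List ℤ := (psh p.1, psh p.2)

@[simp] lemma ev2_add2 (p q : List ℤ × List ℤ) (x : ℂ) : ev2 (add2 p q) x = ev2 p x + ev2 q x := by
  simp only [ev2, add2, ev_padd]; ring
@[simp] lemma ev2_sc2 (c : ℤ) (p : List ℤ × List ℤ) (x : ℂ) : ev2 (sc2 c p) x = c * ev2 p x := by
  simp only [ev2, sc2, ev_psc]; ring
@[simp] lemma ev2_con2 (c : ℤ) (x : ℂ) : ev2 (con2 c) x = c := by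
  simp [ev2, con2, ev]
@[simp] lemma ev2_mul2 (p q : List ℤ × List ℤ) (x : ℂ) : ev2 (mul2 p q) x = ev2 p x * ev2 q x := by
  simp only [ev2, mul2, ev_padd, ev_pmul, ev_psc]
  push_cast
  linear_combination (-(ev p.2 x * ev q.2 x)) * I_mul_I
lemma ev2_sh2 (p : List ℤ × List ℤ) (x : ℂ) : ev2 (sh2 p) x = ev2 p (x + 1) := by
  simp only [ev2, sh2, ev_psh]

def hc (D2 : ℤ) (W : List ℤ × List ℤ) : List ℤ → List ℤ × List ℤ
  | [] => ([], [])
  | q :: l => add2 (con2 (q * D2 ^ l.length)) (mul2 W (hc D2 W l))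

lemma ev2_hc (D2 : ℤ) (hD : D2 ≠ 0) (W : List ℤ × List ℤ) (l : List ℤ) (x : ℂ) :
    (D2 : ℂ) * ev2 (hc D2 W l) x = (D2 : ℂ) ^ l.length * ev l (ev2 W x / D2) := by
  have hD' : (D2 : ℂ) ≠ 0 := by exact_mod_cast hD
  induction l with
  | nil => simp [hc, ev2, ev]
  | cons q l ih =>
    simp only [hc, ev2_add2, ev2_con2, ev2_mul2, ev, List.length_cons, pow_succ]
    push_cast
    have : (D2 : ℂ) * (q * D2 ^ l.length + ev2 W x * ev2 (hc D2 W l) x)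
      = D2 * (q * D2 ^ l.length) + ev2 W x * (D2 * ev2 (hc D2 W l) x) := by ring
    rw [this, ih]
    field_simp

def InD (z : ℂ) (d : ℤ × ℤ × ℤ) : Prop := ‖z - (d.1 + I * d.2.1)‖ ≤ d.2.2
def dmul (u v : ℤ × ℤ × ℤ) : ℤ × ℤ × ℤ :=
  (u.1 * v.1 - u.2.1 * v.2.1, u.1 * v.2.1 + u.2.1 * v.1,
    nb u.1 u.2.1 * v.2.2 + nb v.1 v.2.1 * u.2.2 + u.2.2 * v.2.2)
def dconj (u : ℤ × ℤ × ℤ) : ℤ × ℤ × ℤ := (u.1, -u.2.1, u.2.2)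

lemma InD_conj {z : ℂ} {u} (h : InD z u) : InD ((starRingEnd ℂ) z) (dconj u) := by
  unfold InD dconj at *
  rw [← norm_conj]
  simpa using h

lemma InD_mul {z w : ℂ} {u v} (h : InD z u) (k : InD w v) : InD (z * w) (dmul u v) := by
  obtain ⟨a, b, r⟩ := u
  obtain ⟨c, d, s⟩ := v
  unfold InD dmul at *
  simp only at *
  have h1 := nb_bound a b
  have h2 := nb_bound c d
  have e : z * w - (((a * c - b * d : ℤ) : ℂ) + I * ((a * d + b * c : ℤ) : ℂ))
    = (a + I * b) * (w - (c + I * d)) + (c + I * d) * (z - (a + I * b))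
      + (z - (a + I * b)) * (w - (c + I * d)) := by
    push_cast
    linear_combination ((b * d : ℂ)) * I_mul_I
  rw [e]
  have hr := (norm_nonneg _).trans h
  have hs := (norm_nonneg _).trans k
  refine (norm_add_le _ _).trans ?_
  push_cast
  refine add_le_add ((norm_add_le _ _).trans (add_le_add ?_ ?_)) ?_ <;> rw [norm_mul]
  · exact mul_le_mul h1 k (norm_nonneg _) ((norm_nonneg _).trans h1)
  · exact mul_le_mul h2 h (norm_nonneg _) ((norm_nonneg _).trans h2)
  · exact mul_le_mul h k (norm_nonneg _) hr

lemma InD_pos {z : ℂ} {u} (h : InD z u) (hu : u.2.2 < u.1) : 0 < z.re := by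
  unfold InD at h
  have h1 := (abs_le.1 ((abs_re_le_norm _).trans h)).1
  have h2 : (u.2.2 : ℝ) < u.1 := by exact_mod_cast hu
  simp at h1
  linarith

/-- disc containing the values of a polynomial on the half unit disc, enlarged by an error -/
def pdisc (p : List ℤ × List ℤ) (e : ℤ) : ℤ × ℤ × ℤ :=
  (p.1.headD 0, p.2.headD 0, (rb2 p.1.tail p.2.tail + 1) / 2 + e)

lemma ev_head (p : List ℤ) (x : ℂ) : ev p x = (p.headD 0 : ℤ) + x * ev p.tail x := by
  cases p <;> simp [ev]

lemma InD_pdisc (p : List ℤ × List ℤ) {e : ℤ} {x z : ℂ} (hx : ‖x‖ ≤ 1 / 2)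
    (hz : ‖z - ev2 p x‖ ≤ e) : InD z (pdisc p e) := by
  unfold InD pdisc
  simp only
  have e1 : z - ((p.1.headD 0 : ℤ) + I * (p.2.headD 0 : ℤ)) = x * (ev p.1.tail x + I * ev p.2.tail x)
      + (z - ev2 p x) := by
    rw [ev2, ev_head p.1, ev_head p.2]; ring
  rw [e1]
  refine (norm_add_le _ _).trans ?_
  push_cast
  exact add_le_add (by exact_mod_cast half_aux hx (rb2_bound _ _ hx)) hz

def XP (E S : ℤ) (q : List ℤ) (l : List ℤ × List ℤ) : List ℤ × List ℤ :=
  add2 (mul2 (add2 (mul2 l l) (con2 (-(E * E)))) (hc (4 * E * E) (mul2 l l) q))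
    (con2 (S * (4 * E * E) ^ q.length))

noncomputable def xhat (S : ℤ) (q : List ℤ) (z : ℂ) : ℂ := (z ^ 2 - 1 / 4) * (ev q (z ^ 2) / S) + 1

lemma ev2_XP {E S : ℤ} (hE : E ≠ 0) (hS : S ≠ 0) (q : List ℤ) (l : List ℤ × List ℤ) (x : ℂ) :
    ev2 (XP E S q l) x = (S * (4 * E * E) ^ q.length : ℤ) * xhat S q (ev2 l x / (2 * E)) := by
  have hE' : (E : ℂ) ≠ 0 := by exact_mod_cast hE
  have hS' : (S : ℂ) ≠ 0 := by exact_mod_cast hS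
  have h := ev2_hc (4 * E * E) (by simp [hE]) (mul2 l l) q x
  rw [ev2_mul2] at h
  have e : (ev2 l x / (2 * E)) ^ 2 = ev2 l x * ev2 l x / ((4 * E * E : ℤ) : ℂ) := by
    push_cast; field_simp; ring
  simp only [XP, ev2_add2, ev2_mul2, ev2_con2, xhat, e]
  push_cast at h ⊢
  set Q := ev q (ev2 l x * ev2 l x / (4 * E * E))
  have : (ev2 l x * ev2 l x + -((E : ℂ) * E)) * ev2 (hc (4 * E * E) (mul2 l l) q) x =
    (ev2 l x * ev2 l x / (4 * E * E) - 1 / 4) * (4 * E * E * ev2 (hc (4 * E * E) (mul2 l l) q) x) := by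
    field_simp; ring
  rw [this, h]
  field_simp

noncomputable def ghat (An Ad S : ℤ) (q : List ℤ) (s : ℂ) : ℂ :=
  ((An : ℂ) / Ad * s + 3) * (s - 1) ^ 2 * xhat S q (s + 3 / 2)
    - 2 * (s - 1) * (s - 3) * xhat S q (s + 1 / 2) - (s + 2) * (s - 3) * xhat S q (s - 1 / 2)

noncomputable def vhat (An Ad S : ℤ) (q : List ℤ) (s : ℂ) : ℂ :=
  xhat S q (s + 3 / 2) * ((An : ℂ) / Ad * s + 3)

def VP (E An Ad S : ℤ) (q : List ℤ) (l : List ℤ × List ℤ) : List ℤ × List ℤ :=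
  mul2 (add2 (sc2 An (add2 l (con2 E))) (con2 (6 * Ad * E))) (XP E S q (add2 l (con2 (4 * E))))

def GP (E Ad S : ℤ) (q : List ℤ) (l : List ℤ × List ℤ) (V : List ℤ × List ℤ) : List ℤ × List ℤ :=
  add2 (mul2 (mul2 (add2 l (con2 (-E))) (add2 l (con2 (-E)))) V)
    (sc2 (-(2 * Ad * E)) (add2 (sc2 2 (mul2 (mul2 (add2 l (con2 (-E))) (add2 l (con2 (-5 * E))))
      (XP E S q (add2 l (con2 (2 * E))))))
      (mul2 (mul2 (add2 l (con2 (5 * E))) (add2 l (con2 (-5 * E)))) (XP E S q l))))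

lemma ev2_VP {E An Ad S : ℤ} (hE : E ≠ 0) (hS : S ≠ 0) (hA : Ad ≠ 0) (q : List ℤ)
    (l : List ℤ × List ℤ) (x s : ℂ) (hs : ev2 l x = (2 * s - 1) * E) :
    ev2 (VP E An Ad S q l) x = (S * (4 * E * E) ^ q.length * (2 * Ad * E) : ℤ) * vhat An Ad S q s := by
  have hE' : (E : ℂ) ≠ 0 := by exact_mod_cast hE
  have hA' : (Ad : ℂ) ≠ 0 := by exact_mod_cast hA
  have e : (ev2 l x + (4 * E : ℤ)) / (2 * E) = s + 3 / 2 := by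
    rw [hs]; push_cast; field_simp; ring
  simp only [VP, ev2_mul2, ev2_add2, ev2_sc2, ev2_con2, ev2_XP hE hS, vhat, e]
  rw [hs]
  push_cast
  field_simp
  ring

lemma ev2_GP {E An Ad S : ℤ} (hE : E ≠ 0) (hS : S ≠ 0) (hA : Ad ≠ 0) (q : List ℤ)
    (l : List ℤ × List ℤ) (x s : ℂ) (hs : ev2 l x = (2 * s - 1) * E) :
    ev2 (GP E Ad S q l (VP E An Ad S q l)) x
      = (S * (4 * E * E) ^ q.length * (2 * Ad * E) * (4 * E * E) : ℤ) * ghat An Ad S q s := by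
  have hE' : (E : ℂ) ≠ 0 := by exact_mod_cast hE
  have hA' : (Ad : ℂ) ≠ 0 := by exact_mod_cast hA
  have e0 : ev2 l x / (2 * E) = s - 1 / 2 := by
    rw [hs]; field_simp
  have e1 : (ev2 l x + (2 * E : ℤ)) / (2 * E) = s + 1 / 2 := by
    rw [hs]; push_cast; field_simp; ring
  simp only [GP, ev2_mul2, ev2_add2, ev2_sc2, ev2_con2, ev2_XP hE hS, ev2_VP hE hS hA q l x s hs,
    ghat, vhat, e0, e1]
  rw [hs]
  push_cast
  field_simp
  ring

def Pl : List ℤ := [864278365, -4998281833, 9022562757, -76113065, -14353150362, 1910132012, 17731283398, 11644043310, -61818979685, 117450061561, -276753008753, 476283576953, -460345370334, 231059151450, -47627454727]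

def SS : ℤ := 11655146884054539422344342970995827469840428887831684385105452485050368000000000000000000

def qL : List ℤ := [
  268454136272043813025041089218770998397691010605767962832224564639379539015761920000000,
  2882012857512971572865520694634934512401647530573375926062687774690863638118400000000,
  19398046666585440356898996839420110911403680913237376218862574521751888199680000000,
  92572590877923228257822481418757351742185457623052958550311843263330385920000000,
  334556625759100991908271688977583461067526497514281137828895500443582464000000,
  952140577752508525756471615177388290727996151066602534261012910550548480000,
  2187593956399533419085186187955654728432850493540519807101392367124480000,
  4127710309112853662039881643439543417497213473722699603906951905280000,
  6480623398210707072247633246690416553527871184684226548324106240000,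
  8559942029411121759598375974647308191244965567215078555516928000,
  9606197801290742080724506087248055241809346914511257967001600,
  9242890226504803486983363105519647853437373998081192755200,
  7689852351153702119949586994303283722761760957005824000,
  5575819774779811565508470898066523118099256626380800,
  3549458716465890855729258937471452085260417761280,
  1997208621791054104610515943140840391926874112,
  999566245390594235216704241800691357079552,
  447540957798793870044274987966433549280,
  180217030811500835708061218156857881]

def chk (k : ℤ) (G V : List ℤ × List ℤ) : Bool :=
  let r := dmul (pdisc G (6 * (7 * (2*k+2)^4 + 3200 * (2*k+2)^2 + 140000) * (SS * 100 ^ 19 * 10 ^ 10)))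
    (dmul (dconj (pdisc V (24 * ((2*k+2)^2 + 500) * (SS * 100 ^ 19 * 10 ^ 10))))
    (dconj (12209000 - 10000 * (2*k+1)^2, -134000 * (2*k+1),
      20000 * (2*k+1) + 10000 + 67000 + 134000 + 1400 * (2*k+2))))
  decide (r.2.2 < r.1)

def loopc : ℕ → ℤ → List ℤ × List ℤ → List ℤ × List ℤ → Bool
  | 0, _, _, _ => true
  | n + 1, k, G, V => chk k G V && loopc n (k + 1) (sh2 G) (sh2 V)

def V0 : List ℤ × List ℤ := VP 5 4719755119659774 (10 ^ 17) SS qL ([], [1, 2])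
def G0 : List ℤ × List ℤ := GP 5 (10 ^ 17) SS qL ([], [1, 2]) V0

set_option maxRecDepth 100000 in
lemma loop_ok : loopc 64 0 G0 V0 = true := by decide +kernel

def Approx : Prop := ∀ z : ℂ, |z.re| ≤ 3 → ‖z‖ ≤ 13.2 → ‖completedRiemannZeta₀ (1/2+z)‖ ≤ 1 ∧
  ‖completedRiemannZeta₀ (1/2+z) - ev qL (z^2) / SS‖ ≤ 6e-6

abbrev Ann : ℤ := 4719755119659774
abbrev Adn : ℤ := 10 ^ 17

lemma A_err : ‖A - (Ann : ℂ) / (Adn : ℤ)‖ ≤ 1e-15 := by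
  rw [A_real]
  have : ((Ann : ℂ) / (Adn : ℤ)) = (((4719755119659774 : ℝ) / 10 ^ 17 : ℝ) : ℂ) := by
    simp only [Ann, Adn]; push_cast; norm_num
  rw [this, ← ofReal_sub, norm_real, Real.norm_eq_abs, abs_le]
  have h1 := Real.pi_gt_d20
  have h2 := Real.pi_lt_d20
  constructor <;> norm_num at * <;> linarith

lemma chi_err (h : Approx) {s : ℂ} (h1 : |(s - 1/2).re| ≤ 3) (h2 : ‖s - 1/2‖ ≤ 13.2) :
    ‖chi s‖ ≤ ‖s‖ * ‖s - 1‖ + 1 ∧ ‖chi s - xhat SS qL (s - 1/2)‖ ≤ ‖s‖ * ‖s - 1‖ * 6e-6 := by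
  obtain ⟨a, b⟩ := h _ h1 h2
  rw [show 1/2 + (s - 1/2) = s by ring] at a b
  constructor
  · unfold chi
    refine (norm_add_le _ _).trans ?_
    rw [norm_mul, norm_mul, norm_one]
    nlinarith [norm_nonneg s, norm_nonneg (s-1), mul_nonneg (norm_nonneg s) (norm_nonneg (s-1))]
  · have : chi s - xhat SS qL (s - 1/2) = s * (s - 1) * (completedRiemannZeta₀ s - ev qL ((s - 1/2)^2) / SS) := by
      unfold chi xhat; ring
    rw [this, norm_mul, norm_mul]
    exact mul_le_mul_of_nonneg_left b (by positivity)

lemma g_err (h : Approx) {s : ℂ} (hr : |s.re| ≤ 1.25) (hi : |s.im| ≤ 12.8) :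
    ‖gg s - ghat Ann Adn SS qL s‖ ≤
      1e-15 * ‖s‖ * ‖s - 1‖ ^ 2 * (‖s + 2‖ * ‖s + 1‖ + 1)
      + (3 + 0.0472 * ‖s‖) * ‖s - 1‖ ^ 2 * (‖s + 2‖ * ‖s + 1‖ * 6e-6)
      + 2 * ‖s - 1‖ * ‖s - 3‖ * (‖s + 1‖ * ‖s‖ * 6e-6)
      + ‖s + 2‖ * ‖s - 3‖ * (‖s‖ * ‖s - 1‖ * 6e-6) ∧
    ‖DD s - vhat Ann Adn SS qL s‖ ≤ (3 + 0.0472 * ‖s‖) * (‖s + 2‖ * ‖s + 1‖ * 6e-6)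
      + 1e-15 * ‖s‖ * (‖s + 2‖ * ‖s + 1‖ + 1) := by
  have key : ∀ c : ℝ, 0 ≤ c → c ≤ 2 → |(s + c - 1/2).re| ≤ 3 ∧ ‖s + c - 1/2‖ ≤ 13.2 := by
    intro c hc hc2
    rw [abs_le] at hr hi
    have e1 : (s + c - 1/2).re = s.re + c - 1/2 := by simp
    have e2 : (s + c - 1/2).im = s.im := by simp
    refine ⟨by rw [e1, abs_le]; constructor <;> linarith, ?_⟩
    apply le_of_sq_le_sq _ (by norm_num)
    rw [← normSq_eq_norm_sq, normSq_apply, e1, e2]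
    nlinarith
  obtain ⟨-, c0⟩ := chi_err h (s := s) (by simpa using (key 0 le_rfl (by norm_num)).1)
    (by simpa using (key 0 le_rfl (by norm_num)).2)
  obtain ⟨-, c1⟩ := chi_err h (s := s + 1) (by simpa using (key 1 (by norm_num) (by norm_num)).1)
    (by simpa using (key 1 (by norm_num) (by norm_num)).2)
  obtain ⟨d2, c2⟩ := chi_err h (s := s + 2) (by simpa using (key 2 (by norm_num) (by norm_num)).1)
    (by simpa using (key 2 (by norm_num) (by norm_num)).2)
  rw [show s + 1 - 1/2 = s + 1/2 by ring, show s + 1 - 1 = s by ring] at c1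
  rw [show s + 2 - 1/2 = s + 3/2 by ring, show s + 2 - 1 = s + 1 by ring] at c2
  rw [show s + 2 - 1 = s + 1 by ring] at d2
  have hA := A_err
  set Ah : ℂ := (Ann : ℂ) / (Adn : ℤ) with hAh
  have hAs : ‖Ah * s + 3‖ ≤ 3 + 0.0472 * ‖s‖ := by
    refine (norm_add_le _ _).trans ?_
    have : ‖Ah‖ ≤ 0.0472 := by
      rw [hAh]; simp only [Ann, Adn]; push_cast; norm_num
    rw [norm_mul]; simp only [Complex.norm_ofNat]
    nlinarith [norm_nonneg s]
  set x0 := xhat SS qL (s - 1/2)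
  set x1 := xhat SS qL (s + 1/2)
  set x2 := xhat SS qL (s + 3/2)
  constructor
  · have e : gg s - ghat Ann Adn SS qL s = (A - Ah) * s * (s - 1)^2 * chi (s + 2)
        + (Ah * s + 3) * (s - 1)^2 * (chi (s + 2) - x2)
        - 2 * (s - 1) * (s - 3) * (chi (s + 1) - x1) - (s + 2) * (s - 3) * (chi s - x0) := by
      unfold gg ghat; ring
    rw [e]
    refine (norm_sub_le _ _).trans (add_le_add ((norm_sub_le _ _).trans
      (add_le_add ((norm_add_le _ _).trans (add_le_add ?_ ?_)) ?_)) ?_)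
    · rw [norm_mul, norm_mul, norm_mul, norm_pow]; gcongr
    · rw [norm_mul, norm_mul, norm_pow]; gcongr
    · rw [norm_mul, norm_mul, norm_mul]; simp only [Complex.norm_ofNat]; gcongr
    · rw [norm_mul, norm_mul]; gcongr
  · have e : DD s - vhat Ann Adn SS qL s = (Ah * s + 3) * (chi (s + 2) - x2) + (A - Ah) * s * chi (s + 2) := by
      unfold DD vhat; ring
    rw [e]
    refine (norm_add_le _ _).trans (add_le_add ?_ ?_)
    · rw [norm_mul]; gcongr
    · rw [norm_mul, norm_mul]; gcongr

lemma line_err (h : Approx) {t T : ℝ} (ht : 0 ≤ t) (htT : t ≤ T) (hT : T ≤ 12.8) :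
    ‖gg (1/2+t*I) - ghat Ann Adn SS qL (1/2+t*I)‖ ≤ 6e-6 * (7 * T^4 + 32 * T^2 + 14) ∧
    ‖DD (1/2+t*I) - vhat Ann Adn SS qL (1/2+t*I)‖ ≤ 6e-6 * 4 * (T^2 + 5) := by
  set s : ℂ := 1/2+t*I with hs
  have sre : s.re = 1/2 := by simp [hs]
  have sim : s.im = t := by simp [hs]
  obtain ⟨a, b⟩ := g_err h (s := s) (by rw [sre, abs_le]; norm_num) (by rw [sim, abs_of_nonneg ht]; linarith)
  have n0 : ‖s‖^2 = t^2 + 1/4 := by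
    rw [← normSq_eq_norm_sq, normSq_apply, sre, sim]; ring
  have n1 : ‖s - 1‖^2 = t^2 + 1/4 := by
    rw [← normSq_eq_norm_sq, normSq_apply]; simp [sre, sim]; ring
  have n01 : ‖s - 1‖ = ‖s‖ := by
    rw [← sq_eq_sq₀ (norm_nonneg _) (norm_nonneg _), n0, n1]
  have n3 : ‖s - 3‖^2 = t^2 + 25/4 := by
    rw [← normSq_eq_norm_sq, normSq_apply]; simp [sre, sim]; ring
  have n2 : ‖s + 2‖^2 = t^2 + 25/4 := by
    rw [← normSq_eq_norm_sq, normSq_apply]; simp [sre, sim]; ring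
  have n23 : ‖s + 2‖ = ‖s - 3‖ := by
    rw [← sq_eq_sq₀ (norm_nonneg _) (norm_nonneg _), n2, n3]
  have n4 : ‖s + 1‖^2 = t^2 + 9/4 := by
    rw [← normSq_eq_norm_sq, normSq_apply]; simp [sre, sim]; ring
  have hsn : ‖s‖ ≤ 13 := by
    apply le_of_sq_le_sq _ (by norm_num)
    rw [n0]; nlinarith
  have p1 : ‖s + 2‖ * ‖s + 1‖ ≤ t^2 + 17/4 := by
    have := two_mul_le_add_sq ‖s+2‖ ‖s+1‖
    linarith
  have p2 : ‖s - 1‖ * ‖s - 3‖ ≤ t^2 + 13/4 := by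
    have := two_mul_le_add_sq ‖s-1‖ ‖s-3‖
    linarith
  have p3 : ‖s + 1‖ * ‖s‖ ≤ t^2 + 5/4 := by
    have := two_mul_le_add_sq ‖s+1‖ ‖s‖
    linarith
  have p4 : ‖s + 2‖ * ‖s - 3‖ = t^2 + 25/4 := by rw [n23, ← pow_two, n3]
  have p5 : ‖s‖ * ‖s - 1‖ = t^2 + 1/4 := by rw [n01, ← pow_two, n0]
  have q2 : t^2 ≤ T^2 := pow_le_pow_left₀ ht htT 2
  have q4 : t^4 ≤ T^4 := pow_le_pow_left₀ ht htT 4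
  have q0 : 0 ≤ t^2 := sq_nonneg t
  have q40 : 0 ≤ t^4 := by positivity
  constructor
  · refine a.trans ?_
    have e1 : 1e-15 * ‖s‖ * ‖s - 1‖ ^ 2 * (‖s + 2‖ * ‖s + 1‖ + 1) ≤ 1e-15 * 13 * (t^2+1/4) * (t^2 + 17/4 + 1) := by
      rw [n1]; gcongr
    have e2 : (3 + 0.0472 * ‖s‖) * ‖s - 1‖ ^ 2 * (‖s + 2‖ * ‖s + 1‖ * 6e-6) ≤
      (3 + 0.0472 * 13) * (t^2+1/4) * ((t^2 + 17/4) * 6e-6) := by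
      rw [n1]; gcongr
    have e3 : 2 * ‖s - 1‖ * ‖s - 3‖ * (‖s + 1‖ * ‖s‖ * 6e-6) ≤ 2 * (t^2+13/4) * ((t^2+5/4) * 6e-6) := by
      rw [mul_assoc 2]; gcongr
    have e4 : ‖s + 2‖ * ‖s - 3‖ * (‖s‖ * ‖s - 1‖ * 6e-6) = (t^2+25/4) * ((t^2+1/4) * 6e-6) := by
      rw [p4, p5]
    rw [e4]
    linarith
  · refine b.trans ?_
    have e1 : (3 + 0.0472 * ‖s‖) * (‖s + 2‖ * ‖s + 1‖ * 6e-6) ≤ (3 + 0.0472 * 13) * ((t^2 + 17/4) * 6e-6) := by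
      gcongr
    have e2 : 1e-15 * ‖s‖ * (‖s + 2‖ * ‖s + 1‖ + 1) ≤ 1e-15 * 13 * (t^2 + 17/4 + 1) := by gcongr
    linarith

lemma loop_sound (n : ℕ) : ∀ (k : ℤ) (G V : List ℤ × List ℤ), loopc n k G V = true → ∀ j : ℕ, j < n →
    ∃ G' V' : List ℤ × List ℤ, (∀ x, ev2 G' x = ev2 G (x + j)) ∧ (∀ x, ev2 V' x = ev2 V (x + j)) ∧
      chk (k + j) G' V' = true := by
  induction n with
  | zero => intro k G V _ j hj; omega
  | succ n ih =>
    intro k G V h j hj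
    rw [loopc, Bool.and_eq_true] at h
    cases j with
    | zero => exact ⟨G, V, by simp, by simp, by simpa using h.1⟩
    | succ j =>
      obtain ⟨G', V', a, b, c⟩ := ih _ _ _ h.2 j (by omega)
      refine ⟨G', V', fun x => ?_, fun x => ?_, ?_⟩
      · rw [a, ev2_sh2]; push_cast; ring_nf
      · rw [b, ev2_sh2]; push_cast; ring_nf
      · rw [← c]; push_cast; ring_nf

lemma SS_pos : 0 < SS := by unfold SS; norm_num
lemma qL_len : qL.length = 19 := rfl

lemma q_disc (ρ : ℂ) (hp : |ρ.re - 1.17| ≤ 0.007) (hm : |normSq ρ - 13.129| ≤ 0.06) (t : ℝ) (k : ℕ)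
    (y : ℝ) (hy : |y| ≤ 1/2) (ht : t = (2 * k + 1 + 2 * y) / 10) :
    InD (10^6 * ((1/2+t*I-ρ)*(1/2+t*I-(starRingEnd ℂ) ρ)))
     (12209000 - 10000 * (2*k+1)^2, -134000 * (2*k+1),
      20000 * (2*k+1) + 10000 + 67000 + 134000 + 1400 * (2*k+2)) := by
  unfold InD
  simp only
  set q := (1/2+t*I-ρ)*(1/2+t*I-(starRingEnd ℂ) ρ) with hq
  have qre : q.re = -(t^2 - 1/4 + ρ.re - normSq ρ) := by
    simp [hq, normSq_apply]; ring
  have qim : q.im = -(t * (2 * ρ.re - 1)) := by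
    simp [hq]; ring
  have hk : (0:ℝ) ≤ k := Nat.cast_nonneg k
  rw [abs_le] at hp hm hy
  refine (norm_le_abs_re_add_abs_im _).trans ?_
  have e1 : (10 ^ 6 * q - (((12209000 - 10000 * (2 * k + 1) ^ 2 : ℤ) : ℂ) +
      I * ((-134000 * (2 * k + 1) : ℤ) : ℂ))).re = 10^6 * q.re - (12209000 - 10000 * (2 * k + 1) ^ 2) := by
    have := re_ofReal_mul (10^6) q
    push_cast at this
    rw [sub_re, this]
    norm_num
    try norm_cast
    try push_cast
    try ring
  have e2 : (10 ^ 6 * q - (((12209000 - 10000 * (2 * k + 1) ^ 2 : ℤ) : ℂ) +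
      I * ((-134000 * (2 * k + 1) : ℤ) : ℂ))).im = 10^6 * q.im + 134000 * (2 * k + 1) := by
    have := im_ofReal_mul (10^6) q
    push_cast at this
    rw [sub_im, this]
    norm_num
    try norm_cast
    try push_cast
    try ring
  rw [e1, e2, qre, qim]
  have b1 : |10^6 * -(t^2 - 1/4 + ρ.re - normSq ρ) - (12209000 - 10000 * (2 * (k:ℝ) + 1) ^ 2)|
      ≤ 20000 * (2*(k:ℝ)+1) + 10000 + 67000 := by
    have e : 10^6 * -(t^2 - 1/4 + ρ.re - normSq ρ) - (12209000 - 10000 * (2 * (k:ℝ) + 1) ^ 2)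
       = -(40000 * ((2*k+1) * y)) - 40000 * y^2 - 10^6 * (ρ.re - 1.17) + 10^6 * (normSq ρ - 13.129) := by
      rw [ht]; ring
    have y2 : y^2 ≤ 1/4 := by nlinarith
    have y3 : 0 ≤ y^2 := sq_nonneg y
    have h1 : (2*(k:ℝ)+1) * y ≤ (2*(k:ℝ)+1) * (1/2) := by apply mul_le_mul_of_nonneg_left <;> linarith
    have h2 : (2*(k:ℝ)+1) * (-(1/2)) ≤ (2*(k:ℝ)+1) * y := by apply mul_le_mul_of_nonneg_left <;> linarith
    rw [e, abs_le]
    constructor <;> linarith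
  have b2 : |10^6 * -(t * (2 * ρ.re - 1)) + 134000 * (2 * (k:ℝ) + 1)| ≤ 134000 + 1400 * (2*(k:ℝ)+2) := by
    have e : 10^6 * -(t * (2 * ρ.re - 1)) + 134000 * (2 * (k:ℝ) + 1) = -(268000 * y) - (2*(k:ℝ)+1+2*y) * (200000 * (ρ.re - 1.17)) := by
      rw [ht]; ring
    rw [e, abs_le]
    have h0 : 0 ≤ 2*(k:ℝ)+1+2*y := by linarith
    have h1 : 2*(k:ℝ)+1+2*y ≤ 2*(k:ℝ)+2 := by linarith
    constructor <;> nlinarith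
  push_cast
  refine (add_le_add b1 b2).trans (le_of_eq ?_)
  ring

lemma small_t (h : Approx) (ρ : ℂ) (hp : |ρ.re - 1.17| ≤ 0.007) (hm : |normSq ρ - 13.129| ≤ 0.06)
    (t : ℝ) (ht0 : 0 ≤ t) (ht : t < 12.8) :
    0 < (gg (1/2+t*I) * (starRingEnd ℂ) (DD (1/2+t*I) *
      ((1/2+t*I-ρ)*(1/2+t*I-(starRingEnd ℂ) ρ)))).re := by
  set k : ℕ := ⌊5 * t⌋₊ with hk
  have hk1 : (k:ℝ) ≤ 5 * t := Nat.floor_le (by linarith)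
  have hk2 : 5 * t < k + 1 := Nat.lt_floor_add_one _
  have hk3 : k < 64 := by
    rw [hk, Nat.floor_lt (by linarith)]; norm_num; linarith
  set y : ℝ := 5 * t - k - 1/2 with hy
  have hyb : |y| ≤ 1/2 := by rw [abs_le]; constructor <;> linarith
  have hty : t = (2 * k + 1 + 2 * y) / 10 := by rw [hy]; ring
  obtain ⟨G', V', hG, hV, hc⟩ := loop_sound 64 0 G0 V0 loop_ok k hk3
  have hkT : ((2 * k + 2 : ℝ) / 10) ≤ 12.8 := by
    have : (k:ℝ) ≤ 63 := by exact_mod_cast Nat.le_of_lt_succ hk3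
    linarith
  obtain ⟨ge, ve⟩ := line_err h ht0 (T := (2 * k + 2) / 10) (by linarith) hkT
  have hS0 : SS ≠ 0 := SS_pos.ne'
  have hl : ev2 ([], [1, 2]) ((y:ℂ) + k) = (2 * (1/2 + t * I) - 1) * (5:ℤ) := by
    simp only [ev2, ev]; rw [hty]; push_cast; ring
  have hG2 := ev2_GP (E := 5) (An := Ann) (Ad := Adn) (by norm_num) hS0 (by norm_num [Adn]) qL ([], [1,2]) _ _ hl
  have hV2 := ev2_VP (E := 5) (An := Ann) (Ad := Adn) (by norm_num) hS0 (by norm_num [Adn]) qL ([], [1,2]) _ _ hl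
  have hyc : ‖(y:ℂ)‖ ≤ 1/2 := by rw [norm_real]; exact hyb
  set s : ℂ := 1/2 + t * I with hs
  set M : ℤ := SS * 100 ^ 19 * 10 ^ 10 with hM
  have hMpos : 0 < M := by have := SS_pos; positivity
  have hMr : (0:ℝ) < M := by exact_mod_cast hMpos
  have c1 : (SS * (4 * 5 * 5) ^ qL.length * (2 * Adn * 5) * (4 * 5 * 5) : ℤ) = M * 10^10 := by
    rw [qL_len, hM]; simp only [Adn]; ring
  have c2 : (SS * (4 * 5 * 5) ^ qL.length * (2 * Adn * 5) : ℤ) = M * 10^8 := by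
    rw [qL_len, hM]; simp only [Adn]; ring
  rw [c1] at hG2
  rw [c2] at hV2
  have hgd : InD (((M * 10^10 : ℤ) : ℂ) * gg s)
      (pdisc G' (6 * (7 * (2*(0 + (k:ℤ))+2)^4 + 3200 * (2*(0 + (k:ℤ))+2)^2 + 140000) * M)) := by
    apply InD_pdisc _ hyc
    rw [hG, G0, V0, hG2, ← mul_sub, norm_mul, Complex.norm_intCast, abs_of_pos (by positivity)]
    have := mul_le_mul_of_nonneg_left ge (show (0:ℝ) ≤ M * 10^10 by positivity)
    generalize ‖gg s - ghat Ann Adn SS qL s‖ = w at this ⊢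
    clear_value M
    push_cast
    ring_nf at this ⊢
    linarith
  have hvd : InD (((M * 10^8 : ℤ) : ℂ) * DD s)
      (pdisc V' (24 * ((2*(0 + (k:ℤ))+2)^2 + 500) * M)) := by
    apply InD_pdisc _ hyc
    rw [hV, V0, hV2, ← mul_sub, norm_mul, Complex.norm_intCast, abs_of_pos (by positivity)]
    have := mul_le_mul_of_nonneg_left ve (show (0:ℝ) ≤ M * 10^8 by positivity)
    generalize ‖DD s - vhat Ann Adn SS qL s‖ = w at this ⊢
    clear_value M
    push_cast
    ring_nf at this ⊢
    linarith
  have hqd := q_disc ρ hp hm t k y hyb hty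
  simp only [chk, decide_eq_true_eq] at hc
  rw [← hM] at hc
  have fin := InD_pos (InD_mul hgd (InD_mul (InD_conj hvd) (InD_conj (by rw [zero_add]; exact hqd)))) hc
  set q := (s-ρ)*(s-(starRingEnd ℂ) ρ)
  have e : ((M * 10^10 : ℤ) : ℂ) * gg s * ((starRingEnd ℂ) (((M * 10^8 : ℤ) : ℂ) * DD s) *
      (starRingEnd ℂ) (10^6 * q)) = (((M * 10^10) * (M * 10^8) * 10^6 : ℝ) : ℂ) *
        (gg s * (starRingEnd ℂ) (DD s * q)) := by
    simp only [map_mul, map_intCast, map_pow, map_ofNat]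
    push_cast
    ring
  rw [e, re_ofReal_mul] at fin
  exact (mul_pos_iff_of_pos_left (by positivity)).1 fin

lemma ev_two (l : List ℤ) (x : ℂ) : ev l x = (l.headD 0 : ℤ) + x * (l.tail.headD 0 : ℤ) + x^2 * ev l.tail.tail x := by
  match l with
  | [] => simp [ev]
  | [a] => simp [ev]
  | a :: b :: l => simp [ev]; ring

def Gρ : List ℤ × List ℤ := GP 15000 Adn SS qL ([20100, 400], [102879]) (VP 15000 Ann Adn SS qL ([20100, 400], [102879]))
def Nρ : ℤ := SS * (4 * 15000 * 15000) ^ qL.length * (2 * Adn * 15000) * (4 * 15000 * 15000)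

def chkρ (G : List ℤ × List ℤ) : Bool :=
  decide (10000 * nb (G.1.headD 0) (G.2.headD 0) ≤ 7 * Nρ) &&
  decide ((740 * Nρ) ^ 2 ≤ 10000 ^ 2 * (G.1.tail.headD 0 ^ 2 + G.2.tail.headD 0 ^ 2)) &&
  decide (1000 * rb2 G.1.tail.tail G.2.tail.tail ≤ Nρ)

set_option maxRecDepth 100000 in
lemma chkρ_ok : chkρ Gρ = true := by decide +kernel

lemma Nρ_pos : 0 < Nρ := by
  have := SS_pos
  unfold Nρ Adn
  positivity

lemma ghat_ρ (x : ℂ) (hx : ‖x‖ = 1/2) :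
    ‖ghat Ann Adn SS qL (1.17 + 3.4293 * I)‖ ≤ 0.0007 ∧
    0.03675 ≤ ‖ghat Ann Adn SS qL (1.17 + 3.4293 * I + x / 75) - ghat Ann Adn SS qL (1.17 + 3.4293 * I)‖ := by
  have key : ∀ y : ℂ, ev2 Gρ y = (Nρ:ℤ) * ghat Ann Adn SS qL (1.17 + 3.4293 * I + y / 75) := by
    intro y
    have hl : ev2 ([20100, 400], [102879]) y = (2 * (1.17 + 3.4293 * I + y / 75) - 1) * (15000 : ℤ) := by
      simp only [ev2, ev]; push_cast; ring
    exact ev2_GP (E := 15000) (An := Ann) (Ad := Adn) (by norm_num) SS_pos.ne' (by norm_num [Adn]) qL _ _ _ hl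
  have hN : (0:ℝ) < Nρ := by exact_mod_cast Nρ_pos
  have hN' : (Nρ:ℂ) ≠ 0 := by exact_mod_cast Nρ_pos.ne'
  have hc := chkρ_ok
  simp only [chkρ, Bool.and_eq_true, decide_eq_true_eq] at hc
  obtain ⟨⟨h0, h1⟩, h2⟩ := hc
  set a0 := Gρ.1.headD 0
  set b0 := Gρ.2.headD 0
  set a1 := Gρ.1.tail.headD 0
  set b1 := Gρ.2.tail.headD 0
  have e : ∀ y, ev2 Gρ y = (a0 + I * b0) + y * (a1 + I * b1) + y^2 * (ev Gρ.1.tail.tail y + I * ev Gρ.2.tail.tail y) := by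
    intro y
    rw [ev2, ev_two Gρ.1, ev_two Gρ.2]; ring
  have k0 := key 0
  rw [e 0] at k0
  simp only [zero_mul, zero_div, add_zero, ne_eq, OfNat.ofNat_ne_zero, not_false_eq_true, zero_pow] at k0
  have kx := key x
  rw [e x] at kx
  set g0 := ghat Ann Adn SS qL (1.17 + 3.4293 * I)
  set gx := ghat Ann Adn SS qL (1.17 + 3.4293 * I + x / 75)
  set R := ev Gρ.1.tail.tail x + I * ev Gρ.2.tail.tail x
  constructor
  · have n := congrArg norm k0
    rw [norm_mul, Complex.norm_intCast, abs_of_pos hN] at n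
    have hb := nb_bound a0 b0
    rw [n] at hb
    have : (10000:ℝ) * nb a0 b0 ≤ 7 * Nρ := by exact_mod_cast h0
    have : (Nρ:ℝ) * ‖g0‖ ≤ Nρ * 0.0007 := by linarith
    exact le_of_mul_le_mul_left this hN
  · have d : (Nρ:ℂ) * (gx - g0) = x * (a1 + I * b1) - -(x^2 * R) := by
      rw [mul_sub, ← kx, ← k0]; ring
    have n := congrArg norm d
    rw [norm_mul, Complex.norm_intCast, abs_of_pos hN] at n
    have tri := norm_sub_norm_le (x * (a1 + I * b1)) (-(x^2 * R))
    rw [← n, norm_neg, norm_mul, norm_mul, norm_pow, hx] at tri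
    have hR : ‖R‖ ≤ rb2 Gρ.1.tail.tail Gρ.2.tail.tail := rb2_bound _ _ hx.le
    have h2' : (1000:ℝ) * rb2 Gρ.1.tail.tail Gρ.2.tail.tail ≤ Nρ := by exact_mod_cast h2
    have hc1 : 0.0740 * Nρ ≤ ‖(a1 + I * b1 : ℂ)‖ := by
      apply le_of_sq_le_sq _ (norm_nonneg _)
      have : ‖(a1 + I * b1 : ℂ)‖ ^ 2 = (a1:ℝ) ^ 2 + (b1:ℝ) ^ 2 := by
        rw [← normSq_eq_norm_sq, normSq_apply]; simp; ring
      rw [this]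
      have : (740 * Nρ : ℝ) ^ 2 ≤ 10000 ^ 2 * ((a1:ℝ) ^ 2 + (b1:ℝ) ^ 2) := by exact_mod_cast h1
      generalize (a1:ℝ) = u at this ⊢
      generalize (b1:ℝ) = v at this ⊢
      generalize (Nρ:ℝ) = w at this ⊢
      linarith
    have : (Nρ:ℝ) * 0.03675 ≤ Nρ * ‖gx - g0‖ := by linarith
    exact le_of_mul_le_mul_left this hN

lemma g_errρ (h : Approx) (s : ℂ) (hs : ‖s - (1.17 + 3.4293 * I)‖ ≤ 1/150) :
    ‖gg s - ghat Ann Adn SS qL s‖ ≤ 0.0082 := by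
  set a : ℂ := 1.17 + 3.4293 * I with ha
  have hre : a.re = 1.17 := by simp [ha]
  have him : a.im = 3.4293 := by simp [ha]
  have h1 := (abs_re_le_norm (s - a)).trans hs
  have h2 := (abs_im_le_norm (s - a)).trans hs
  rw [sub_re, hre, abs_le] at h1
  rw [sub_im, him, abs_le] at h2
  obtain ⟨ge, -⟩ := g_err h (s := s) (by rw [abs_le]; constructor <;> linarith) (by rw [abs_le]; constructor <;> linarith)
  have B : ∀ (c M : ℝ), 0 ≤ M → (1.18 + c)^2 + 3.436^2 ≤ M^2 → (1.16+c)^2 + 3.436^2 ≤ M^2 → ‖s + c‖ ≤ M := by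
    intro c M hM hm hm2
    apply le_of_sq_le_sq _ hM
    rw [← normSq_eq_norm_sq, normSq_apply]
    simp only [add_re, add_im, ofReal_re, ofReal_im]
    nlinarith
  have b0 := B 0 3.64 (by norm_num) (by norm_num) (by norm_num)
  have b1 := B (-1) 3.45 (by norm_num) (by norm_num) (by norm_num)
  have b3 := B (-3) 3.90 (by norm_num) (by norm_num) (by norm_num)
  have c1 := B 1 4.08 (by norm_num) (by norm_num) (by norm_num)
  have c2 := B 2 4.69 (by norm_num) (by norm_num) (by norm_num)
  push_cast at b0 b1 b3 c1 c2
  rw [add_zero] at b0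
  rw [← sub_eq_add_neg] at b1 b3
  refine ge.trans ?_
  calc _ ≤ 1e-15 * 3.64 * 3.45 ^ 2 * (4.69 * 4.08 + 1)
      + (3 + 0.0472 * 3.64) * 3.45 ^ 2 * (4.69 * 4.08 * 6e-6)
      + 2 * 3.45 * 3.90 * (4.08 * 3.64 * 6e-6)
      + 4.69 * 3.90 * (3.64 * 3.45 * (6e-6 : ℝ)) := by gcongr
    _ ≤ _ := by norm_num

lemma exists_ρ (h : Approx) : ∃ ρ : ℂ, ‖ρ - (1.17 + 3.4293 * I)‖ ≤ 1/150 ∧ gg ρ = 0 := by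
  set a : ℂ := 1.17 + 3.4293 * I with ha
  have ea := g_errρ h a (by rw [sub_self, norm_zero]; norm_num)
  have ga : ‖gg a‖ ≤ 0.0089 := by
    have := (ghat_ρ (1/2) (by norm_num)).1
    have t := norm_add_le (gg a - ghat Ann Adn SS qL a) (ghat Ann Adn SS qL a)
    rw [sub_add_cancel] at t
    rw [← ha] at this
    exact t.trans ((add_le_add ea this).trans (by norm_num))
  have sph : ∀ z ∈ Metric.sphere a (1/150), 0.02035 ≤ ‖gg z - gg a‖ := by
    intro z hz
    rw [mem_sphere_iff_norm] at hz
    have ez := g_errρ h z hz.le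
    have := (ghat_ρ (75 * (z - a)) (by rw [norm_mul, hz]; norm_num)).2
    rw [← ha, show a + 75 * (z - a) / 75 = z by ring] at this
    have e : ghat Ann Adn SS qL z - ghat Ann Adn SS qL a = (gg z - gg a) - ((gg z - ghat Ann Adn SS qL z) - (gg a - ghat Ann Adn SS qL a)) := by ring
    rw [e] at this
    have t1 := norm_sub_le (gg z - gg a) ((gg z - ghat Ann Adn SS qL z) - (gg a - ghat Ann Adn SS qL a))
    have t2 := norm_sub_le (gg z - ghat Ann Adn SS qL z) (gg a - ghat Ann Adn SS qL a)
    have t3 := this.trans (t1.trans (add_le_add_right (t2.trans (add_le_add ez ea)) _))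
    generalize ‖gg z - gg a‖ = w at t3 ⊢
    linarith
  have fr : ∃ᶠ z in nhds a, gg z ≠ gg a := by
    intro hcon
    simp only [not_not] at hcon
    have an : AnalyticOnNhd ℂ gg Set.univ := gg_diff.differentiableOn.analyticOnNhd isOpen_univ
    have := an.eq_of_eventuallyEq (g := fun _ => gg a) analyticOnNhd_const hcon
    have s1 := sph (a + (1/150 : ℝ)) (by rw [mem_sphere_iff_norm, add_sub_cancel_left, norm_real]; norm_num)
    rw [this] at s1
    norm_num at s1
  have := gg_diff.diffContOnCl.ball_subset_image_closedBall (by norm_num) sph fr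
  have m : (0:ℂ) ∈ Metric.ball (gg a) (0.02035 / 2) := by
    rw [mem_ball_iff_norm, zero_sub, norm_neg]
    refine ga.trans_lt (by norm_num)
  obtain ⟨ρ, h1, h2⟩ := this m
  exact ⟨ρ, by rwa [mem_closedBall_iff_norm] at h1, h2⟩

theorem final_of (h : Approx) : ∃ ρ₀ : ℂ, (1.1 < ρ₀.re ∧ ρ₀.re < 1.25) ∧ (3.3 < ρ₀.im ∧ ρ₀.im < 3.55) ∧
    gg ρ₀ = 0 ∧ ∀ t : ℝ, 0 ≤ t → 0 < (gg (1/2+t*I) * (starRingEnd ℂ) (DD (1/2+t*I) * ((1/2+t*I-ρ₀)*(1/2+t*I-(starRingEnd ℂ) ρ₀)))).re := by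
  obtain ⟨ρ, hρ, hz⟩ := exists_ρ h
  set a : ℂ := 1.17 + 3.4293 * I with ha
  have hre : a.re = 1.17 := by simp [ha]
  have him : a.im = 3.4293 := by simp [ha]
  have h1 := (abs_re_le_norm (ρ - a)).trans hρ
  have h2 := (abs_im_le_norm (ρ - a)).trans hρ
  rw [sub_re, hre] at h1
  rw [sub_im, him] at h2
  have hp : |ρ.re - 1.17| ≤ 0.007 := h1.trans (by norm_num)
  rw [abs_le] at h1 h2
  have hm : |normSq ρ - 13.129| ≤ 0.06 := by
    rw [normSq_apply, abs_le]
    have hn : (ρ.re - 1.17)^2 + (ρ.im - 3.4293)^2 ≤ (1/150)^2 := by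
      have : ‖ρ - a‖^2 ≤ (1/150)^2 := pow_le_pow_left₀ (norm_nonneg _) hρ 2
      rw [← normSq_eq_norm_sq, normSq_apply, sub_re, sub_im, hre, him] at this
      linarith
    constructor <;> nlinarith
  refine ⟨ρ, ⟨by linarith, by linarith⟩, ⟨by linarith, by linarith⟩, hz, fun t ht => ?_⟩
  rcases lt_or_ge t 12.8 with h' | h'
  · exact small_t h ρ hp hm t ht h'
  · exact large_t ρ hp hm t h'

lemma Psi_nat {x : ℝ} (hx : 0 < x) : HasSum (fun n : ℕ => 2 * Real.exp (-Real.pi * ((n:ℝ)+1)^2 * x)) (Psi x) := by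
  have h := (Kk_hasSum hx).nat_add_neg
  rw [← hasSum_nat_add_iff' 1] at h
  simp only [Finset.range_one, Finset.sum_singleton] at h
  norm_num at h
  refine Eq.mp (congrArg (fun f => HasSum f (Psi x)) (funext fun n => ?_)) h
  have h1 : ((n:ℤ) + 1 = 0) = False := by simp; omega
  have h2 : (-1 + -(n:ℤ) = 0) = False := by simp; omega
  simp only [h1, h2, if_false]
  rw [show (-1 + -(n:ℝ))^2 = ((n:ℝ)+1)^2 by ring]
  ring_nf

lemma Psi_two {x : ℝ} (hx : 1 ≤ x) : 0 ≤ Psi x - 2 * Real.exp (-Real.pi * x) ∧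
    Psi x - 2 * Real.exp (-Real.pi * x) ≤ 2.02 * Real.exp (-4 * Real.pi * x) := by
  have h := Psi_nat (x := x) (by linarith)
  rw [← hasSum_nat_add_iff' 1] at h
  simp only [Finset.range_one, Finset.sum_singleton] at h
  norm_num at h
  have hpi := Real.pi_gt_three
  have e1 : Real.exp (-(Real.pi * x)) = Real.exp (-Real.pi * x) := by ring_nf
  rw [e1] at h
  refine ⟨h.nonneg (fun n => by positivity), ?_⟩
  set r := Real.exp (-12) with hr
  have hr1 : r ≤ 0.001 := by
    have : Real.exp (-12) = (Real.exp 12)⁻¹ := Real.exp_neg _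
    have h2 : (1000:ℝ) ≤ Real.exp 12 := by
      have h3 : (2:ℝ) ≤ Real.exp 1 := by have := Real.add_one_le_exp (1:ℝ); linarith
      have : Real.exp 12 = Real.exp 1 ^ 12 := by rw [← Real.exp_nat_mul]; norm_num
      rw [this]
      calc (1000:ℝ) ≤ 2 ^ 12 := by norm_num
        _ ≤ _ := by gcongr
    rw [hr, this]
    calc (Real.exp 12)⁻¹ ≤ (1000:ℝ)⁻¹ := by gcongr
      _ = _ := by norm_num
  have hr0 : 0 < r := Real.exp_pos _
  have g := (hasSum_geometric_of_lt_one hr0.le (by linarith : r < 1)).mul_left (2 * Real.exp (-4 * Real.pi * x))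
  have := hasSum_le (fun n => ?_) h g
  · refine this.trans ?_
    have : (1 - r)⁻¹ ≤ 1.01 := by
      rw [inv_le_comm₀ (by linarith) (by norm_num)]; norm_num; linarith
    nlinarith [Real.exp_pos (-4 * Real.pi * x)]
  · rw [hr, ← Real.exp_nat_mul, mul_assoc 2, ← Real.exp_add]
    refine mul_le_mul_of_nonneg_left (Real.exp_le_exp.2 ?_) (by norm_num)
    have : Real.pi * 1 ≤ Real.pi * x := by gcongr
    have hn : (0:ℝ) ≤ n := Nat.cast_nonneg n
    nlinarith [mul_nonneg hn hn, mul_nonneg hn (by linarith : 0 ≤ Real.pi * x - 3), mul_nonneg (mul_nonneg hn hn) (by linarith : 0 ≤ Real.pi * x - 3)]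

lemma Kk_two {u : ℝ} (hu : 0 ≤ u) :
    |Kk u - 2 * Real.exp (-Real.pi * Real.exp (2*u) + u/2)| ≤ 2.02 * Real.exp (-4 * Real.pi * Real.exp (2*u) + u/2) := by
  have hx : 1 ≤ Real.exp (2*u) := Real.one_le_exp (by linarith)
  obtain ⟨a, b⟩ := Psi_two hx
  have e : Kk u - 2 * Real.exp (-Real.pi * Real.exp (2*u) + u/2) = (Psi (Real.exp (2*u)) - 2 * Real.exp (-Real.pi * Real.exp (2*u))) * Real.exp (u/2) := by
    rw [Real.exp_add, Kk]; ring
  rw [e, abs_of_nonneg (mul_nonneg a (Real.exp_pos _).le), Real.exp_add, ← mul_assoc]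
  exact mul_le_mul_of_nonneg_right b (Real.exp_pos _).le

lemma exp_small : Real.exp (-9) ≤ 0.0002 := by
  have h3 : (2.7:ℝ) ≤ Real.exp 1 := by have := Real.exp_one_gt_d9; linarith
  have : Real.exp 9 = Real.exp 1 ^ 9 := by rw [← Real.exp_nat_mul]; norm_num
  rw [Real.exp_neg, this]
  calc (Real.exp 1 ^ 9)⁻¹ ≤ ((2.7:ℝ) ^ 9)⁻¹ := by gcongr
    _ ≤ _ := by norm_num

lemma Kk_le {u : ℝ} (hu : 0 ≤ u) : Kk u ≤ 2.001 * Real.exp (-Real.pi * Real.exp (2*u) + u/2) := by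
  have h := (abs_le.1 (Kk_two hu)).2
  have hx : 1 ≤ Real.exp (2*u) := Real.one_le_exp (by linarith)
  have : Real.exp (-4 * Real.pi * Real.exp (2*u) + u/2) ≤ Real.exp (-9) * Real.exp (-Real.pi * Real.exp (2*u) + u/2) := by
    rw [← Real.exp_add]
    apply Real.exp_le_exp.2
    nlinarith [Real.pi_gt_three]
  nlinarith [exp_small, Real.exp_pos (-Real.pi * Real.exp (2*u) + u/2)]

noncomputable def evr : List ℤ → ℝ → ℝ
  | [], _ => 0
  | a :: l, x => a + x * evr l x

lemma evr_ev (l : List ℤ) (x : ℝ) : ((evr l x : ℝ) : ℂ) = ev l x := by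
  induction l with
  | nil => simp [evr, ev]
  | cons a l ih => simp [evr, ev, ih]

def pder : List ℤ → List ℤ
  | [] => []
  | _ :: l => padd l (0 :: pder l)

lemma evr_padd (p q : List ℤ) (x : ℝ) : evr (padd p q) x = evr p x + evr q x := by
  have := ev_padd p q x
  rw [← evr_ev, ← evr_ev, ← evr_ev] at this
  exact_mod_cast this
lemma evr_psc (c : ℤ) (p : List ℤ) (x : ℝ) : evr (psc c p) x = c * evr p x := by
  have := ev_psc c p x
  rw [← evr_ev, ← evr_ev] at this
  exact_mod_cast this
lemma evr_pmul (p q : List ℤ) (x : ℝ) : evr (pmul p q) x = evr p x * evr q x := by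
  have := ev_pmul p q x
  rw [← evr_ev, ← evr_ev, ← evr_ev] at this
  exact_mod_cast this

lemma evr_deriv (l : List ℤ) (x : ℝ) : HasDerivAt (evr l) (evr (pder l) x) x := by
  induction l with
  | nil =>
    have : evr [] = fun _ => 0 := by funext x; simp [evr]
    rw [this]; simpa [pder, evr] using hasDerivAt_const x (0:ℝ)
  | cons a l ih =>
    have e : evr (a :: l) = fun x => (a:ℝ) + x * evr l x := by funext x; simp [evr]
    rw [e]
    have := ((hasDerivAt_id x).mul ih).const_add (a:ℝ)
    refine this.congr_deriv ?_
    simp [pder, evr_padd, evr]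

def sab : List ℤ → ℤ
  | [] => 0
  | a :: l => |a| + sab l

lemma sab_bound (l : List ℤ) {x : ℝ} (h0 : 0 ≤ x) (h1 : x ≤ 1) : |evr l x| ≤ sab l := by
  induction l with
  | nil => simp [evr, sab]
  | cons a l ih =>
    simp only [evr, sab]
    refine (abs_add_le _ _).trans ?_
    push_cast
    rw [abs_mul, abs_of_nonneg h0]
    have := abs_nonneg (evr l x)
    nlinarith

def F17 : ℤ := 355687428096000
def TL : List ℤ := [F17, 2 * F17, 4 * (F17 / 2), 8 * (F17 / 6), 16 * (F17 / 24), 32 * (F17 / 120), 64 * (F17 / 720),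
  128 * (F17 / 5040), 256 * (F17 / 40320), 512 * (F17 / 362880), 1024 * (F17 / 3628800), 2048 * (F17 / 39916800),
  4096 * (F17 / 479001600), 8192 * (F17 / 6227020800), 16384 * (F17 / 87178291200), 32768 * (F17 / 1307674368000),
  65536 * (F17 / 20922789888000), 131072]

lemma TL_eq (x : ℝ) : evr TL x = F17 * ∑ m ∈ Finset.range 18, (2 * x) ^ m / (m.factorial : ℝ) := by
  simp only [TL, evr, F17, Finset.sum_range_succ, Finset.sum_range_zero, Nat.factorial]
  norm_num
  ring

lemma TL_err {x : ℝ} (h0 : 0 ≤ x) (h1 : x ≤ 3/4) : |Real.exp (2 * x) - evr TL x / F17| ≤ 1e-12 := by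
  have hn : ‖((2 * x : ℝ) : ℂ)‖ ≤ 3/2 := by
    rw [norm_real, Real.norm_eq_abs, abs_of_nonneg (by linarith)]; linarith
  have := Complex.exp_bound' (x := ((2*x : ℝ) : ℂ)) (n := 18) (by norm_num at hn ⊢; linarith)
  have e : Complex.exp ((2*x:ℝ):ℂ) - ∑ m ∈ Finset.range 18, ((2*x:ℝ):ℂ) ^ m / (m.factorial : ℂ)
     = ((Real.exp (2*x) - ∑ m ∈ Finset.range 18, (2 * x) ^ m / (m.factorial : ℝ) : ℝ) : ℂ) := by
    push_cast; rfl
  rw [e, norm_real, Real.norm_eq_abs] at this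
  rw [TL_eq, mul_div_cancel_left₀ _ (by norm_num [F17])]
  refine this.trans ?_
  calc _ ≤ (3/2:ℝ)^18 / (Nat.factorial 18 : ℝ) * 2 := by gcongr
    _ ≤ _ := by norm_num [Nat.factorial]

def KR : ℤ := F17 * 10 ^ 12
def RL : List ℤ := padd (psc (2 * KR) (pder Pl)) (padd (psc (-KR) Pl) (psc (4 * 3141592653590) (pmul TL Pl)))

def R0 : List ℤ := (hc 256 ([3, 6], []) RL).1
def chkr : ℕ → List ℤ → Bool
  | 0, _ => true
  | n + 1, l => decide (10 ^ 10 * hb l ≤ 780 * (2 * KR * 10 ^ 10) * 256 ^ (RL.length - 1)) && chkr n (psh l)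

set_option maxRecDepth 100000 in
lemma chkr_ok : chkr 32 R0 = true := by decide +kernel

lemma chkr_sound (n : ℕ) : ∀ (l : List ℤ), chkr n l = true → ∀ j : ℕ, j < n → ∀ x : ℂ, ‖x‖ ≤ 1/2 →
    10 ^ 10 * ‖ev l (x + j)‖ ≤ ((780 * (2 * KR * 10 ^ 10) * 256 ^ (RL.length - 1) : ℤ) : ℝ) := by
  induction n with
  | zero => intro l _ j hj; omega
  | succ n ih =>
    intro l h j hj x hx
    rw [chkr, Bool.and_eq_true, decide_eq_true_eq] at h
    cases j with
    | zero =>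
      have h1 := hb_bound l hx
      have h2 : ((10 ^ 10 * hb l : ℤ) : ℝ) ≤ _ := Int.cast_le.2 h.1
      simp only [Nat.cast_zero, add_zero]
      refine le_trans ?_ h2
      push_cast
      linarith
    | succ j =>
      have := ih _ h.2 j (by omega) x hx
      rw [ev_psh] at this
      rw [show x + ((j+1:ℕ):ℂ) = x + j + 1 by push_cast; ring]
      exact this

lemma hc_real (D : ℤ) (w : List ℤ) (l : List ℤ) (x : ℂ) : ev (hc D (w, []) l).2 x = 0 := by
  induction l with
  | nil => simp [hc, ev]
  | cons q l ih => simp [hc, add2, con2, mul2, ev_padd, ev_pmul, ih, ev]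

lemma RL_len : RL.length = (RL.length - 1) + 1 := by decide +kernel

lemma RL_bound {u : ℝ} (h0 : 0 ≤ u) (h1 : u < 3/4) : |evr RL u| ≤ 7.8e-8 * (2 * KR * 10 ^ 10) := by
  set k : ℕ := ⌊128 * u / 3⌋₊ with hk
  have hk1 : (k:ℝ) ≤ 128 * u / 3 := Nat.floor_le (by positivity)
  have hk2 : 128 * u / 3 < k + 1 := Nat.lt_floor_add_one _
  have hk3 : k < 32 := by
    rw [hk, Nat.floor_lt (by positivity)]; norm_num; linarith
  set y : ℝ := 128 * u / 3 - k - 1/2 with hy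
  have hyb : ‖(y:ℂ)‖ ≤ 1/2 := by rw [norm_real, Real.norm_eq_abs, abs_le]; constructor <;> linarith
  have c := chkr_sound 32 R0 chkr_ok k hk3 y hyb
  have e := ev2_hc 256 (by norm_num) ([3, 6], []) RL (y + k)
  rw [ev2, hc_real, mul_zero, add_zero, ← R0] at e
  have eu : ev2 ([3, 6], []) (y + k) / ((256:ℤ):ℂ) = (u:ℂ) := by
    simp only [ev2, ev, hy]; push_cast; ring
  rw [eu, RL_len, pow_succ, ← evr_ev] at e
  set N := RL.length - 1
  have n := congrArg norm e
  rw [norm_mul, norm_mul, norm_mul, norm_pow, Complex.norm_intCast, norm_real, Real.norm_eq_abs] at n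
  have hK : (0:ℝ) < KR := by norm_num [KR, F17]
  have h256 : (0:ℝ) < 256 ^ N := by positivity
  push_cast at n c
  rw [abs_of_pos (by norm_num : (0:ℝ) < 256)] at n
  have n2 : ‖ev R0 (y + k)‖ = 256 ^ N * |evr RL u| := by linarith
  rw [n2] at c
  generalize |evr RL u| = w at c ⊢
  generalize (KR:ℝ) = K at c hK ⊢
  generalize (256:ℝ) ^ N = q at c h256 ⊢
  have : q * (10 ^ 10 * w) ≤ q * (780 * (2 * K * 10 ^ 10)) := by linarith
  have := le_of_mul_le_mul_left this h256
  linarith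

lemma sabPl : sab Pl ≤ 200 * 10 ^ 10 := by decide +kernel

lemma res_bound {u : ℝ} (h0 : 0 ≤ u) (h1 : u < 3/4) :
    |evr (pder Pl) u / 10 ^ 10 - (1/2 - 2 * Real.pi * Real.exp (2 * u)) * (evr Pl u / 10 ^ 10)| < 9e-8 := by
  have hR := RL_bound h0 h1
  have hT := TL_err h0 h1.le
  have hP := sab_bound Pl h0 (by linarith)
  have hP2 : (sab Pl : ℝ) ≤ 200 * 10 ^ 10 := by exact_mod_cast sabPl
  have hE : Real.exp (2 * u) ≤ 5 := by
    have : Real.exp (2 * u) ≤ Real.exp 1 * Real.exp (1/2) := by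
      rw [← Real.exp_add]; apply Real.exp_le_exp.2; linarith
    have h3 := Real.exp_one_lt_d9
    have h4 : Real.exp (1/2) ^ 2 = Real.exp 1 := by rw [← Real.exp_nat_mul]; norm_num
    have h5 : Real.exp (1/2) ≤ 1.7 := by
      apply le_of_sq_le_sq _ (by norm_num); rw [h4]; norm_num at *; linarith
    nlinarith [Real.exp_pos 1, Real.exp_pos (1/2)]
  have e : evr RL u = (2 * KR * 10 ^ 10) * (evr (pder Pl) u / 10 ^ 10 - (1/2 - 2 * 3.141592653590 * (evr TL u / F17)) * (evr Pl u / 10 ^ 10)) := by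
    rw [RL, evr_padd, evr_padd, evr_psc, evr_psc, evr_psc, evr_pmul, KR]
    push_cast
    have : (F17:ℝ) ≠ 0 := by norm_num [F17]
    field_simp
    ring
  have hK : (0:ℝ) < 2 * KR * 10 ^ 10 := by norm_num [KR, F17]
  rw [e, abs_mul, abs_of_pos hK, mul_comm] at hR
  have hR := le_of_mul_le_mul_right hR hK
  set p := evr Pl u / 10 ^ 10 with hp
  have hpb : |p| ≤ 200 := by
    rw [hp, abs_div, abs_of_pos (by positivity : (0:ℝ) < 10^10), div_le_iff₀ (by positivity)]
    linarith
  set T := evr TL u / F17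
  set E := Real.exp (2 * u)
  have hE0 : 0 < E := Real.exp_pos _
  have hpi1 := Real.pi_gt_d20
  have hpi2 := Real.pi_lt_d20
  have d : |2 * Real.pi * E - 2 * 3.141592653590 * T| ≤ 2e-11 := by
    have e2 : 2 * Real.pi * E - 2 * 3.141592653590 * T = 2 * (Real.pi - 3.141592653590) * E + 2 * 3.141592653590 * (E - T) := by ring
    rw [e2]
    rw [abs_le] at hT ⊢
    have a1 : (Real.pi - 3.141592653590) * E ≤ 0 := mul_nonpos_of_nonpos_of_nonneg (by norm_num at *; linarith) hE0.le
    have a2 : -1e-12 * 5 ≤ (Real.pi - 3.141592653590) * E := by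
      have : -1e-12 ≤ Real.pi - 3.141592653590 := by norm_num at *; linarith
      nlinarith
    norm_num at *
    constructor <;> linarith
  have e3 : evr (pder Pl) u / 10 ^ 10 - (1/2 - 2 * Real.pi * E) * p = (evr (pder Pl) u / 10 ^ 10 - (1/2 - 2 * 3.141592653590 * T) * p) + (2 * Real.pi * E - 2 * 3.141592653590 * T) * p := by ring
  rw [e3]
  refine (abs_add_le _ _).trans_lt ?_
  rw [abs_mul]
  have : |2 * Real.pi * E - 2 * 3.141592653590 * T| * |p| ≤ 2e-11 * 200 := by gcongr
  generalize |2 * Real.pi * E - 2 * 3.141592653590 * T| * |p| = w at *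
  generalize |evr (pder Pl) u / 10 ^ 10 - (1/2 - 2 * 3.141592653590 * T) * p| = w2 at *
  norm_num at *
  linarith

lemma exp_neg_pi : |2 * Real.exp (-Real.pi) - 864278365 / 10 ^ 10| ≤ 5e-9 := by
  have hn : ‖((-3.1415926536 : ℝ) : ℂ)‖ = 3.1415926536 := by
    rw [norm_real, Real.norm_eq_abs]; norm_num
  have := Complex.exp_bound' (x := ((-3.1415926536 : ℝ) : ℂ)) (n := 22) (by rw [hn]; norm_num)
  have e : Complex.exp ((-3.1415926536:ℝ):ℂ) - ∑ m ∈ Finset.range 22, ((-3.1415926536:ℝ):ℂ) ^ m / (m.factorial : ℂ)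
     = ((Real.exp (-3.1415926536) - ∑ m ∈ Finset.range 22, (-3.1415926536 : ℝ) ^ m / (m.factorial : ℝ) : ℝ) : ℂ) := by
    push_cast; rfl
  rw [e, hn, norm_real, Real.norm_eq_abs] at this
  simp only [Finset.sum_range_succ, Finset.sum_range_zero, Nat.factorial] at this
  have hx : |Real.exp (-3.1415926536) - 864278365 / 10 ^ 10 / 2| ≤ 1e-9 := by
    rw [abs_le] at this ⊢
    norm_num at this ⊢
    constructor <;> linarith
  have hpi1 := Real.pi_gt_d20
  have hpi2 := Real.pi_lt_d20
  have e2 : Real.exp (-Real.pi) = Real.exp (-3.1415926536) * Real.exp (3.1415926536 - Real.pi) := by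
    rw [← Real.exp_add]; ring_nf
  have l1 : 1 ≤ Real.exp (3.1415926536 - Real.pi) := Real.one_le_exp (by norm_num at *; linarith)
  have l2 : Real.exp (3.1415926536 - Real.pi) ≤ 1 + 1e-9 := by
    have h1 := Real.add_one_le_exp (-(3.1415926536 - Real.pi))
    rw [Real.exp_neg] at h1
    have h2 : (1:ℝ) - 1e-10 ≤ (Real.exp (3.1415926536 - Real.pi))⁻¹ := by
      refine le_trans ?_ h1; norm_num at *; linarith
    have h3 := (le_inv_comm₀ (by norm_num) (Real.exp_pos _)).1 h2
    refine h3.trans (by norm_num)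
  rw [e2]
  generalize Real.exp (3.1415926536 - Real.pi) = w at *
  generalize Real.exp (-3.1415926536) = v at *
  rw [abs_le] at hx ⊢
  norm_num at *
  constructor <;> nlinarith

noncomputable def kap (u : ℝ) : ℝ := 2 * Real.exp (-Real.pi * Real.exp (2*u) + u/2)

lemma kap_deriv (u : ℝ) : HasDerivAt kap ((1/2 - 2 * Real.pi * Real.exp (2*u)) * kap u) u := by
  unfold kap
  have h1 : HasDerivAt (fun u : ℝ => Real.exp (2*u)) (Real.exp (2*u) * 2) u := by
    have := ((hasDerivAt_id u).const_mul 2).exp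
    simpa using this
  have h2 : HasDerivAt (fun u : ℝ => -Real.pi * Real.exp (2*u) + u/2) (-Real.pi * (Real.exp (2*u) * 2) + 1/2) u :=
    (h1.const_mul _).add ((hasDerivAt_id u).div_const 2)
  refine (h2.exp.const_mul 2).congr_deriv ?_
  ring

lemma kap_cmp (σ : ℝ) (hσ : σ = 1 ∨ σ = -1) {u : ℝ} (hu : u ∈ Set.Icc (0:ℝ) (3/4)) :
    σ * (evr Pl u / 10 ^ 10 - kap u) ≤ 5e-9 + 9e-8 * u := by
  have hd : ∀ x : ℝ, HasDerivAt (fun u => σ * (evr Pl u / 10 ^ 10 - kap u))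
      (σ * (evr (pder Pl) x / 10 ^ 10 - (1/2 - 2 * Real.pi * Real.exp (2*x)) * kap x)) x := fun x =>
    (((evr_deriv Pl x).div_const _).sub (kap_deriv x)).const_mul σ
  have hB : ∀ x : ℝ, HasDerivAt (fun u : ℝ => 5e-9 + 9e-8 * u) (9e-8 : ℝ) x := fun x => by
    have := ((hasDerivAt_id x).const_mul (9e-8:ℝ)).const_add (5e-9)
    simpa using this
  refine image_le_of_deriv_right_lt_deriv_boundary' (f := fun u => σ * (evr Pl u / 10 ^ 10 - kap u))
    (fun x _ => (hd x).continuousAt.continuousWithinAt) (fun x _ => (hd x).hasDerivWithinAt)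
    (B := fun u => 5e-9 + 9e-8 * u) ?_ (fun x _ => (hB x).continuousAt.continuousWithinAt)
    (fun x _ => (hB x).hasDerivWithinAt) ?_ hu
  · have := exp_neg_pi
    have k0 : kap 0 = 2 * Real.exp (-Real.pi) := by simp [kap]
    have p0 : evr Pl 0 = 864278365 := by simp [Pl, evr]
    simp only [k0, p0, mul_zero, add_zero]
    rw [abs_le] at this
    rcases hσ with h | h <;> rw [h] <;> linarith
  · intro x hx he
    have r := res_bound hx.1 hx.2
    set c := 1/2 - 2 * Real.pi * Real.exp (2*x) with hc
    have hc0 : c ≤ 0 := by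
      have : 1 ≤ Real.exp (2*x) := Real.one_le_exp (by linarith [hx.1])
      nlinarith [Real.pi_gt_three]
    have e : σ * (evr (pder Pl) x / 10 ^ 10 - c * kap x) = σ * (evr (pder Pl) x / 10 ^ 10 - c * (evr Pl x / 10 ^ 10))
       + c * (σ * (evr Pl x / 10 ^ 10 - kap x)) := by ring
    rw [e, he]
    have h1 : c * (5e-9 + 9e-8 * x) ≤ 0 := mul_nonpos_of_nonpos_of_nonneg hc0 (by have := hx.1; positivity)
    rw [abs_lt] at r
    rcases hσ with h | h <;> rw [h] <;> linarith

lemma kap_err {u : ℝ} (hu : u ∈ Set.Icc (0:ℝ) (3/4)) : |evr Pl u / 10 ^ 10 - kap u| ≤ 7.3e-8 := by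
  have h1 := kap_cmp 1 (Or.inl rfl) hu
  have h2 := kap_cmp (-1) (Or.inr rfl) hu
  have := hu.2
  rw [abs_le]
  constructor <;> norm_num at * <;> linarith

lemma kap_le {u : ℝ} (hu : 0 ≤ u) : kap u ≤ 0.09 := by
  have h := (abs_le.1 exp_neg_pi).2
  have : kap u ≤ 2 * Real.exp (-Real.pi) := by
    unfold kap
    have h1 := Real.add_one_le_exp (2*u)
    have : Real.exp (-Real.pi * Real.exp (2*u) + u/2) ≤ Real.exp (-Real.pi) := by
      apply Real.exp_le_exp.2
      nlinarith [Real.pi_gt_three]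
    linarith
  norm_num at h ⊢
  linarith

/- integral of the polynomial part -/
def evI : List ℤ → ℕ → ℚ
  | [], _ => 0
  | a :: l, m => a * ((3/4) ^ (m+1) / (m+1)) + evI l (m+1)

lemma evr_cont (l : List ℤ) : Continuous (evr l) :=
  continuous_iff_continuousAt.2 fun x => (evr_deriv l x).continuousAt

lemma evI_eq (l : List ℤ) (m : ℕ) : ∫ u in (0:ℝ)..(3/4), evr l u * u ^ m = (evI l m : ℚ) := by
  induction l generalizing m with
  | nil => simp [evr, evI]
  | cons a l ih =>
    have e : ∀ u : ℝ, evr (a :: l) u * u ^ m = a * u ^ m + evr l u * u ^ (m+1) := by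
      intro u; simp only [evr]; ring
    simp only [e]
    rw [intervalIntegral.integral_add, intervalIntegral.integral_const_mul, integral_pow, ih, evI]
    · push_cast; simp
    · exact (Continuous.intervalIntegrable (by fun_prop) _ _)
    · exact (Continuous.intervalIntegrable (by have := evr_cont l; fun_prop) _ _)

set_option maxRecDepth 100000 in
lemma qL_ok : ∀ n : Fin 19, ((qL.getD n 0 : ℤ) : ℚ) = SS * (2 / ((2 * (n:ℕ)).factorial : ℕ) * evI Pl (2*n) / 10 ^ 10) := by
  decide +kernel

lemma ev_sum (l : List ℤ) (x : ℂ) : ev l x = ∑ n ∈ Finset.range l.length, ((l.getD n 0 : ℤ) : ℂ) * x ^ n := by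
  induction l with
  | nil => simp [ev]
  | cons a l ih =>
    rw [List.length_cons, Finset.sum_range_succ', ev, ih, Finset.mul_sum, add_comm]
    simp
    apply Finset.sum_congr rfl
    intro n _
    ring

section
open MeasureTheory

lemma cosh_sum (w : ℂ) (N : ℕ) : ∑ m ∈ Finset.range (2*N), (w ^ m / (m.factorial : ℂ) + (-w) ^ m / (m.factorial : ℂ)) =
    ∑ n ∈ Finset.range N, 2 * w ^ (2*n) / ((2*n).factorial : ℂ) := by
  induction N with
  | zero => simp
  | succ N ih =>
    rw [show 2 * (N+1) = 2*N + 1 + 1 by ring, Finset.sum_range_succ, Finset.sum_range_succ, ih, Finset.sum_range_succ]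
    have h1 : (-w) ^ (2*N) = w ^ (2*N) := Even.neg_pow (by simp) w
    have h2 : (-w) ^ (2*N+1) = -w ^ (2*N+1) := Odd.neg_pow (by simp) w
    rw [h1, h2]; ring

lemma cosh_err {w : ℂ} (hw : ‖w‖ ≤ 9.9) :
    ‖cexp w + cexp (-w) - ∑ n ∈ Finset.range 19, 2 * w ^ (2*n) / ((2*n).factorial : ℂ)‖ ≤ 6e-7 := by
  have hw38 : ∀ v : ℂ, ‖v‖ ≤ 9.9 → ‖cexp v - ∑ m ∈ Finset.range 38, v ^ m / (m.factorial : ℂ)‖ ≤ 3e-7 := by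
    intro v hv
    refine (Complex.exp_bound' (n := 38) (by push_cast; linarith)).trans ?_
    calc _ ≤ (9.9:ℝ)^38 / (Nat.factorial 38 : ℝ) * 2 := by gcongr
      _ ≤ _ := by norm_num [Nat.factorial]
  have h1 := hw38 w hw
  have h2 := hw38 (-w) (by rwa [norm_neg])
  rw [← cosh_sum w 19, Finset.sum_add_distrib]
  have e : cexp w + cexp (-w) - (∑ m ∈ Finset.range (2*19), w ^ m / (m.factorial : ℂ) + ∑ m ∈ Finset.range (2*19), (-w) ^ m / (m.factorial : ℂ))
    = (cexp w - ∑ m ∈ Finset.range 38, w ^ m / (m.factorial : ℂ)) + (cexp (-w) - ∑ m ∈ Finset.range 38, (-w) ^ m / (m.factorial : ℂ)) := by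
    ring
  rw [e]
  refine (norm_add_le _ _).trans ((add_le_add h1 h2).trans (by norm_num))

noncomputable def Tz (z : ℂ) (u : ℝ) : ℂ := ∑ n ∈ Finset.range 19, 2 * (z * u) ^ (2*n) / ((2*n).factorial : ℂ)

lemma Q_int (z : ℂ) : ∫ u in (0:ℝ)..(3/4), ((evr Pl u / 10 ^ 10 : ℝ) : ℂ) * Tz z u = ev qL (z^2) / SS := by
  have e : ∀ u : ℝ, ((evr Pl u / 10 ^ 10 : ℝ) : ℂ) * Tz z u = ∑ n ∈ Finset.range 19,
      (2 * z ^ (2*n) / ((2*n).factorial : ℂ) / 10 ^ 10) * ((evr Pl u * u ^ (2*n) : ℝ) : ℂ) := by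
    intro u
    rw [Tz, Finset.mul_sum]
    refine Finset.sum_congr rfl fun n _ => ?_
    rw [mul_pow]; push_cast; ring
  simp only [e]
  rw [intervalIntegral.integral_finsetSum]
  · rw [ev_sum, qL_len, Finset.sum_div]
    refine Finset.sum_congr rfl fun n hn => ?_
    rw [intervalIntegral.integral_const_mul, intervalIntegral.integral_ofReal, evI_eq]
    have hq := qL_ok ⟨n, Finset.mem_range.1 hn⟩
    simp only at hq
    have hq' := congrArg (fun q : ℚ => (q : ℂ)) hq
    push_cast at hq'
    rw [hq', ← pow_mul]
    have : (SS:ℂ) ≠ 0 := by exact_mod_cast SS_pos.ne'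
    push_cast
    field_simp
  · intro n _
    have := evr_cont Pl
    exact Continuous.intervalIntegrable (by fun_prop) _ _

lemma cexp_le {z : ℂ} (hz : |z.re| ≤ 3) {u : ℝ} (hu : 0 ≤ u) : ‖cexp (z*u) + cexp (-(z*u))‖ ≤ 2 * Real.exp (3*u) := by
  refine (norm_add_le _ _).trans ?_
  rw [Complex.norm_exp, Complex.norm_exp, neg_re, re_mul_ofReal]
  rw [abs_le] at hz
  have h1 : Real.exp (z.re * u) ≤ Real.exp (3*u) := Real.exp_le_exp.2 (by nlinarith)
  have h2 : Real.exp (-(z.re * u)) ≤ Real.exp (3*u) := Real.exp_le_exp.2 (by nlinarith)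
  linarith

lemma F_int (z : ℂ) : IntegrableOn (fun u:ℝ => (Kk u:ℂ)*(cexp (z*u) + cexp (-(z*u)))) (Set.Ioi 0) := by
  have h := (FF_int z).1.add (FF_int (-z)).1
  refine h.congr_fun (fun u _ => ?_) measurableSet_Ioi
  simp only [Pi.add_apply]
  rw [neg_mul]; ring

lemma F_norm {z : ℂ} (hz : |z.re| ≤ 3) {u : ℝ} (hu : 0 ≤ u) :
    ‖(Kk u:ℂ)*(cexp (z*u) + cexp (-(z*u)))‖ ≤ 4.002 * Real.exp (-Real.pi * Real.exp (2*u) + 3.5*u) := by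
  rw [norm_mul, norm_real, Real.norm_eq_abs, abs_of_nonneg (Kk_nonneg u)]
  have e : Real.exp (-Real.pi * Real.exp (2*u) + 3.5*u) = Real.exp (-Real.pi * Real.exp (2*u) + u/2) * Real.exp (3*u) := by
    rw [← Real.exp_add]; ring_nf
  rw [e]
  calc _ ≤ (2.001 * Real.exp (-Real.pi * Real.exp (2*u) + u/2)) * (2 * Real.exp (3*u)) :=
        mul_le_mul (Kk_le hu) (cexp_le hz hu) (norm_nonneg _) (by positivity)
    _ = _ := by ring

lemma exp_int_le {a : ℝ} (ha : 0 < a) (c : ℝ) : ∫ x in Set.Ioi c, Real.exp (-a * x) = Real.exp (-a*c) / a := by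
  rw [integral_exp_mul_Ioi (by linarith)]; field_simp

lemma L0_le {z : ℂ} (hz : |z.re| ≤ 3) : ‖completedRiemannZeta₀ (1/2+z)‖ ≤ 1 := by
  rw [L0_int]
  have hi := integrableOn_exp_mul_Ioi (a := -2) (by norm_num) 0
  refine (norm_integral_le_of_norm_le (hi.const_mul 0.4) ((ae_restrict_mem measurableSet_Ioi).mono fun u hu => ?_)).trans ?_
  · have hu : 0 < u := hu
    refine (F_norm hz hu.le).trans ?_
    have h := (abs_le.1 exp_neg_pi).2
    have : Real.exp (-Real.pi * Real.exp (2*u) + 3.5*u) ≤ Real.exp (-Real.pi) * Real.exp (-2 * u) := by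
      rw [← Real.exp_add]
      apply Real.exp_le_exp.2
      have h1 := Real.add_one_le_exp (2*u)
      nlinarith [Real.pi_gt_three]
    have h2 : Real.exp (-Real.pi) ≤ 0.05 := by norm_num at h ⊢; linarith
    nlinarith [Real.exp_pos (-2 * u)]
  · rw [integral_const_mul, exp_int_le (by norm_num)]; norm_num

end

section
open MeasureTheory

lemma tail_le {z : ℂ} (hz : |z.re| ≤ 3) :
    ‖∫ u in Set.Ioi (3/4:ℝ), (Kk u:ℂ)*(cexp (z*u) + cexp (-(z*u)))‖ ≤ 3e-6 := by
  have hi := integrableOn_exp_mul_Ioi (a := -24) (by norm_num) (3/4)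
  have h1 := Real.exp_one_gt_d9
  have h2 : Real.exp (1/2) ^ 2 = Real.exp 1 := by rw [← Real.exp_nat_mul]; norm_num
  have h3 : 1.6487 ≤ Real.exp (1/2) := by
    apply le_of_sq_le_sq _ (Real.exp_pos _).le
    rw [h2]; norm_num at *; linarith
  have h4 : 4.48 ≤ Real.exp (3/2) := by
    have : Real.exp (3/2) = Real.exp 1 * Real.exp (1/2) := by rw [← Real.exp_add]; norm_num
    rw [this]; nlinarith
  refine (norm_integral_le_of_norm_le (hi.const_mul (4.002 * Real.exp 7)) ((ae_restrict_mem measurableSet_Ioi).mono fun u hu => ?_)).trans ?_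
  · have hu : 3/4 < u := hu
    refine (F_norm hz (by linarith)).trans ?_
    rw [mul_assoc, ← Real.exp_add]
    refine mul_le_mul_of_nonneg_left (Real.exp_le_exp.2 ?_) (by norm_num)
    have e : Real.exp (2*u) = Real.exp (3/2) * Real.exp (2*u - 3/2) := by rw [← Real.exp_add]; ring_nf
    have h5 := Real.add_one_le_exp (2*u - 3/2)
    have h6 : 4.48 * (2*u - 1/2) ≤ Real.exp (2*u) := by
      rw [e]; exact mul_le_mul h4 (by linarith) (by linarith) (Real.exp_pos _).le
    have h7 := Real.pi_gt_d2
    have h8 : 3.14 * (4.48 * (2*u - 1/2)) ≤ Real.pi * Real.exp (2*u) := mul_le_mul h7.le h6 (by linarith) (by linarith)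
    linarith
  · rw [integral_const_mul, exp_int_le (by norm_num)]
    have e : 4.002 * Real.exp 7 * (Real.exp (-24 * (3/4)) / 24) = 4.002 / 24 * Real.exp (-11) := by
      rw [show (-11:ℝ) = 7 + (-24 * (3/4)) by norm_num, Real.exp_add]; ring
    rw [e]
    have : Real.exp 11 = Real.exp 1 ^ 11 := by rw [← Real.exp_nat_mul]; norm_num
    have : Real.exp (-11) ≤ ((2.718:ℝ)^11)⁻¹ := by
      rw [Real.exp_neg, this]; gcongr; linarith
    calc _ ≤ 4.002 / 24 * ((2.718:ℝ)^11)⁻¹ := by gcongr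
      _ ≤ _ := by norm_num

lemma head_pt {z : ℂ} (hz : |z.re| ≤ 3) (hz2 : ‖z‖ ≤ 13.2) {u : ℝ} (h0 : 0 ≤ u) (h1 : u ≤ 3/4) :
    ‖(Kk u:ℂ)*(cexp (z*u) + cexp (-(z*u))) - ((evr Pl u / 10 ^ 10 : ℝ) : ℂ) * Tz z u‖ ≤
      1.414e-5 * Real.exp (-21 * u) + 1.46e-6 := by
  have hw : ‖z * u‖ ≤ 9.9 := by
    rw [norm_mul, norm_real, Real.norm_eq_abs, abs_of_nonneg h0]
    calc _ ≤ (13.2:ℝ) * (3/4) := by gcongr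
      _ ≤ _ := by norm_num
  have c1 := cosh_err hw
  have k1 := Kk_two h0
  have k2 := kap_err ⟨h0, h1⟩
  have k3 := kap_le h0
  have c2 := cexp_le hz h0
  rw [← Tz] at c1
  rw [← kap] at k1
  set C := cexp (z*u) + cexp (-(z*u))
  set T := Tz z u
  set p := evr Pl u / 10 ^ 10
  have pb : |p| ≤ 0.1 := by
    have hk : 0 ≤ kap u := by unfold kap; positivity
    rw [abs_le] at k2 ⊢
    norm_num at *
    constructor <;> linarith
  have e : (Kk u:ℂ) * C - (p:ℂ) * T = ((Kk u - kap u : ℝ) : ℂ) * C - ((p - kap u : ℝ):ℂ) * C + (p:ℂ) * (C - T) := by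
    push_cast; ring
  rw [e]
  have E3 : 2 * Real.exp (3*u) ≤ 19 := by
    have g1 := Real.exp_one_lt_d9
    have g2 : Real.exp (1/4) ^ 4 = Real.exp 1 := by rw [← Real.exp_nat_mul]; norm_num
    have g3 : Real.exp (1/4) ≤ 1.2841 := by
      apply le_of_pow_le_pow_left₀ (n := 4) (by norm_num) (by norm_num)
      rw [g2]; norm_num at *; linarith
    have g4 : Real.exp (9/4) = Real.exp 1 ^ 2 * Real.exp (1/4) := by
      rw [← Real.exp_nat_mul, ← Real.exp_add]; norm_num
    have g5 : Real.exp (3*u) ≤ Real.exp (9/4) := Real.exp_le_exp.2 (by linarith)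
    have g6 : Real.exp 1 ^ 2 * Real.exp (1/4) ≤ 2.7182818286^2 * 1.2841 := by gcongr
    rw [g4] at g5
    have g7 := g5.trans g6
    norm_num at g7 ⊢
    linarith
  have E4 : 2.02 * Real.exp (-4 * Real.pi * Real.exp (2*u) + u/2) * (2 * Real.exp (3*u)) ≤ 1.414e-5 * Real.exp (-21 * u) := by
    have a1 : Real.exp (-4 * Real.pi * Real.exp (2*u) + u/2) * Real.exp (3*u) ≤ Real.exp (-Real.pi) ^ 4 * Real.exp (-21*u) := by
      rw [← Real.exp_nat_mul, ← Real.exp_add, ← Real.exp_add]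
      apply Real.exp_le_exp.2
      have g := Real.add_one_le_exp (2*u)
      push_cast
      nlinarith [Real.pi_gt_d2]
    have a2 : Real.exp (-Real.pi) ≤ 0.043214 := by
      have h := (abs_le.1 exp_neg_pi).2
      norm_num at h ⊢; linarith
    have a3 : Real.exp (-Real.pi) ^ 4 ≤ 0.043214 ^ 4 := by gcongr
    have a4 : Real.exp (-Real.pi) ^ 4 ≤ 3.5e-6 := a3.trans (by norm_num)
    have a5 := mul_le_mul_of_nonneg_right a4 (Real.exp_pos (-21*u)).le
    norm_num at *
    linarith
  have n1 : ‖((Kk u - kap u : ℝ) : ℂ) * C‖ ≤ 2.02 * Real.exp (-4 * Real.pi * Real.exp (2*u) + u/2) * (2 * Real.exp (3*u)) := by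
    rw [norm_mul, norm_real, Real.norm_eq_abs]; gcongr
  have n2 : ‖((p - kap u : ℝ) : ℂ) * C‖ ≤ 7.3e-8 * 19 := by
    rw [norm_mul, norm_real, Real.norm_eq_abs]; gcongr; linarith
  have n3 : ‖(p:ℂ) * (C - T)‖ ≤ 0.1 * 6e-7 := by
    rw [norm_mul, norm_real, Real.norm_eq_abs]; gcongr
  refine (norm_add_le _ _).trans ?_
  refine (add_le_add_left (norm_sub_le _ _) _).trans ?_
  have := n1.trans E4
  refine (add_le_add (add_le_add this n2) n3).trans ?_
  norm_num
  linarith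

theorem approx_ok : Approx := by
  intro z hz hz2
  refine ⟨L0_le hz, ?_⟩
  rw [L0_int, ← Q_int, intervalIntegral.integral_of_le (by norm_num),
    ← Set.Ioc_union_Ioi_eq_Ioi (show (0:ℝ) ≤ 3/4 by norm_num)]
  have hF := F_int z
  have hF1 := hF.mono_set (show Set.Ioc (0:ℝ) (3/4) ⊆ Set.Ioi 0 from Set.Ioc_subset_Ioi_self)
  have hF2 := hF.mono_set (Set.Ioi_subset_Ioi (show (0:ℝ) ≤ 3/4 by norm_num))
  rw [setIntegral_union (Set.Ioc_disjoint_Ioi le_rfl) measurableSet_Ioi hF1 hF2]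
  have hG : IntegrableOn (fun u : ℝ => ((evr Pl u / 10 ^ 10 : ℝ) : ℂ) * Tz z u) (Set.Ioc 0 (3/4)) := by
    have := evr_cont Pl
    have hc : Continuous (fun u : ℝ => ((evr Pl u / 10 ^ 10 : ℝ) : ℂ) * Tz z u) := by
      unfold Tz; fun_prop
    exact (hc.integrableOn_Icc (a := 0) (b := 3/4)).mono_set Set.Ioc_subset_Icc_self
  rw [add_sub_right_comm, ← integral_sub hF1 hG]
  refine (norm_add_le _ _).trans ?_
  have t := tail_le hz
  have hi := integrableOn_exp_mul_Ioi (a := -21) (by norm_num) 0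
  have hi2 := hi.mono_set (show Set.Ioc (0:ℝ) (3/4) ⊆ Set.Ioi 0 from Set.Ioc_subset_Ioi_self)
  have hcst : IntegrableOn (fun _ : ℝ => (1.46e-6:ℝ)) (Set.Ioc 0 (3/4)) := by
    exact integrableOn_const (by simp)
  have h := norm_integral_le_of_norm_le ((hi2.const_mul 1.414e-5).add hcst)
    ((ae_restrict_mem measurableSet_Ioc).mono fun u hu => head_pt hz hz2 hu.1.le hu.2)
  have e1 := integral_add (hi2.const_mul 1.414e-5) hcst
  have e2 : ∫ u in Set.Ioc (0:ℝ) (3/4), Real.exp (-21*u) ≤ 1/21 := by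
    refine (setIntegral_mono_set hi (Filter.Eventually.of_forall fun u => (Real.exp_pos _).le)
      (Set.Ioc_subset_Ioi_self.eventuallyLE)).trans ?_
    rw [exp_int_le (by norm_num)]; norm_num
  have e3 : ∫ _ in Set.Ioc (0:ℝ) (3/4), (1.46e-6:ℝ) = 1.46e-6 * (3/4) := by
    simp; norm_num
  rw [integral_const_mul, e3] at e1
  have h' := h.trans e1.le
  refine (add_le_add h' t).trans ?_
  norm_num at e2 ⊢
  linarith

end

theorem f2_zeros_right_halfplane :
    ∃ ρ₀ : ℂ, (1.1 : ℝ) < ρ₀.re ∧ ρ₀.re < (1.25 : ℝ) ∧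
      (3.3 : ℝ) < ρ₀.im ∧ ρ₀.im < (3.55 : ℝ) ∧
      {s : ℂ | 1 / 2 ≤ s.re ∧ f2 s = 0} = {2, ρ₀, (starRingEnd ℂ) ρ₀} ∧
      deriv f2 2 ≠ 0 ∧ deriv f2 ρ₀ ≠ 0 ∧ deriv f2 ((starRingEnd ℂ) ρ₀) ≠ 0 := by
  obtain ⟨ρ, ⟨a, b⟩, ⟨c, d⟩, hz, hb⟩ := final_of approx_ok
  obtain ⟨h1, h2, h3, h4⟩ := main_abs ρ (by linarith) (by linarith) (by linarith) hz hb
  exact ⟨ρ, a, b, c, d, h1, h2, h3, h4⟩
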